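/- arXiv:1506.02855 — 10 statements merged into one kernel-verified Lean document; each statement's English description precedes it below -/
import Mathlib

section
/- Suppose the weight w₁ : A → ℂ satisfies Σ_{e : o(e)=u} |w₁(e)|² = 1 for every vertex u (Setting 1). Then the operator U₁ = S(2 d₁* d₁ − 1) preserves the standard ℓ² norm on C¹(G): ‖U₁ψ‖ = ‖ψ‖ for every ψ ∈ C¹(G); in particular U₁ is unitary. -/
/-!
The weight condition says exactly that `d₁ d₁* = 1`: at a vertex `u`, the composite multiplies by
the sum of `|w₁(ē)|²` over arcs `e` ending at `u`, which the flip turns into the sum of `|w₁|²` over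
arcs leaving `u` (`sum_weight_snd`, `bd1_cobd1`). Hence `d₁* d₁` is an orthogonal projection and
`R = 2 d₁* d₁ − 1` is a reflection. It squares to the identity, so `U₁ = S R` is a composite of two
involutions, which gives bijectivity. Norm preservation is checked on the arcs ending at a fixed
vertex: there the quadratic term `4 |d₁ψ(u)|²` and the cross term `-4 |d₁ψ(u)|²` of `|Rψ|²` cancel
(`sum_normSq_reflOp_snd`).
-/

noncomputable section

open Finset

variable {V : Type*} [Fintype V] [DecidableEq V] (G : SimpleGraph V) [DecidableRel G.Adj]

/-- The flip operator `(Sψ)(e) = ψ(ē)` on `C¹(G)`. -/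
def flipOp (ψ : G.Dart → ℂ) : G.Dart → ℂ := fun e => ψ e.symm

/-- The boundary operator `(d₁ψ)(u) = Σ_{e : t(e)=u} conj(w₁(ē)) ψ(e)` of Setting 1. -/
def bd1 (w₁ : G.Dart → ℂ) (ψ : G.Dart → ℂ) : V → ℂ :=
  fun u => ∑ e ∈ Finset.univ.filter (fun e : G.Dart => e.snd = u),
    (starRingEnd ℂ) (w₁ e.symm) * ψ e

/-- The coboundary operator `(d₁*f)(e) = w₁(ē) f(t(e))` of Setting 1. -/
def cobd1 (w₁ : G.Dart → ℂ) (f : V → ℂ) : G.Dart → ℂ :=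
  fun e => w₁ e.symm * f e.snd

/-- The Szegedy-walk operator `U₁ = S(2 d₁* d₁ − 1)` of Setting 1. -/
def U1 (w₁ : G.Dart → ℂ) (ψ : G.Dart → ℂ) : G.Dart → ℂ :=
  flipOp G (fun e => 2 * cobd1 G w₁ (bd1 G w₁ ψ) e - ψ e)

/-- The reflection `R = 2 d₁* d₁ − 1`, so that `U₁ = S R`. -/
def reflOp (w₁ : G.Dart → ℂ) (ψ : G.Dart → ℂ) : G.Dart → ℂ :=
  fun e => 2 * cobd1 G w₁ (bd1 G w₁ ψ) e - ψ e

theorem flipOp_involutive : Function.Involutive (flipOp G) := by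
  intro ψ
  funext e
  simp [flipOp]

theorem sum_normSq_flipOp (ψ : G.Dart → ℂ) :
    ∑ e : G.Dart, Complex.normSq (flipOp G ψ e) = ∑ e : G.Dart, Complex.normSq (ψ e) :=
  Fintype.sum_equiv SimpleGraph.Dart.symm_involutive.toPerm _ _ fun _ => rfl

/-- The normalization, moved by the flip from arcs leaving `u` to arcs ending at `u`. -/
theorem sum_weight_snd (w₁ : G.Dart → ℂ)
    (hw₁ : ∀ u : V, ∑ e ∈ Finset.univ.filter (fun e : G.Dart => e.fst = u),
      Complex.normSq (w₁ e) = 1) (u : V) :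
    ∑ e ∈ Finset.univ.filter (fun e : G.Dart => e.snd = u),
      Complex.normSq (w₁ e.symm) = 1 := by
  rw [← hw₁ u, Finset.sum_filter, Finset.sum_filter]
  exact Fintype.sum_equiv SimpleGraph.Dart.symm_involutive.toPerm _ _ fun _ => rfl

/-- `d₁ d₁* = 1`. -/
theorem bd1_cobd1 (w₁ : G.Dart → ℂ)
    (hw₁ : ∀ u : V, ∑ e ∈ Finset.univ.filter (fun e : G.Dart => e.fst = u),
      Complex.normSq (w₁ e) = 1) (f : V → ℂ) :
    bd1 G w₁ (cobd1 G w₁ f) = f := by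
  funext u
  calc bd1 G w₁ (cobd1 G w₁ f) u
      = ∑ e ∈ Finset.univ.filter (fun e : G.Dart => e.snd = u),
          (Complex.normSq (w₁ e.symm) : ℂ) * f u := by
        refine Finset.sum_congr rfl fun e he => ?_
        rw [cobd1, (Finset.mem_filter.mp he).2, ← mul_assoc, Complex.normSq_eq_conj_mul_self]
    _ = f u := by
        rw [← Finset.sum_mul, ← Complex.ofReal_sum, sum_weight_snd G w₁ hw₁ u,
          Complex.ofReal_one, one_mul]

theorem bd1_reflOp (w₁ : G.Dart → ℂ)
    (hw₁ : ∀ u : V, ∑ e ∈ Finset.univ.filter (fun e : G.Dart => e.fst = u),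
      Complex.normSq (w₁ e) = 1) (ψ : G.Dart → ℂ) :
    bd1 G w₁ (reflOp G w₁ ψ) = bd1 G w₁ ψ := by
  have h : bd1 G w₁ (reflOp G w₁ ψ)
      = fun u => 2 * bd1 G w₁ (cobd1 G w₁ (bd1 G w₁ ψ)) u - bd1 G w₁ ψ u := by
    funext u
    rw [bd1, bd1, bd1, Finset.mul_sum, ← Finset.sum_sub_distrib]
    refine Finset.sum_congr rfl fun e _ => ?_
    rw [reflOp]
    ring
  rw [h, bd1_cobd1 G w₁ hw₁]
  funext u
  ring

theorem reflOp_involutive (w₁ : G.Dart → ℂ)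
    (hw₁ : ∀ u : V, ∑ e ∈ Finset.univ.filter (fun e : G.Dart => e.fst = u),
      Complex.normSq (w₁ e) = 1) :
    Function.Involutive (reflOp G w₁) := by
  intro ψ
  funext e
  rw [reflOp, bd1_reflOp G w₁ hw₁, reflOp]
  ring

/-- `R` preserves the `ℓ²` norm separately on the arcs ending at each vertex. -/
theorem sum_normSq_reflOp_snd (w₁ : G.Dart → ℂ)
    (hw₁ : ∀ u : V, ∑ e ∈ Finset.univ.filter (fun e : G.Dart => e.fst = u),
      Complex.normSq (w₁ e) = 1) (ψ : G.Dart → ℂ) (u : V) :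
    ∑ e ∈ Finset.univ.filter (fun e : G.Dart => e.snd = u), Complex.normSq (reflOp G w₁ ψ e)
      = ∑ e ∈ Finset.univ.filter (fun e : G.Dart => e.snd = u), Complex.normSq (ψ e) := by
  set c : ℂ := bd1 G w₁ ψ u with hc
  have hcross : ∑ e ∈ Finset.univ.filter (fun e : G.Dart => e.snd = u),
      ((starRingEnd ℂ) c * ((starRingEnd ℂ) (w₁ e.symm) * ψ e)).re = Complex.normSq c := by
    rw [← Complex.re_sum, ← Finset.mul_sum]
    change ((starRingEnd ℂ) c * c).re = _
    rw [← Complex.normSq_eq_conj_mul_self, Complex.ofReal_re]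
  have hterm : ∀ e ∈ Finset.univ.filter (fun e : G.Dart => e.snd = u),
      Complex.normSq (reflOp G w₁ ψ e)
        = 4 * Complex.normSq c * Complex.normSq (w₁ e.symm)
          - 4 * ((starRingEnd ℂ) c * ((starRingEnd ℂ) (w₁ e.symm) * ψ e)).re
          + Complex.normSq (ψ e) := by
    intro e he
    rw [reflOp, cobd1, (Finset.mem_filter.mp he).2, ← hc]
    simp only [Complex.normSq_apply, Complex.sub_re, Complex.sub_im, Complex.mul_re,
      Complex.mul_im, Complex.conj_re, Complex.conj_im, Complex.re_ofNat, Complex.im_ofNat]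
    ring
  rw [Finset.sum_congr rfl hterm, Finset.sum_add_distrib, Finset.sum_sub_distrib,
    ← Finset.mul_sum, ← Finset.mul_sum, hcross, sum_weight_snd G w₁ hw₁ u]
  ring

/-- Under Setting 1 (`Σ_{e : o(e)=u} |w₁(e)|² = 1` for every `u`),
the operator `U₁ = S(2 d₁* d₁ − 1)` preserves the standard ℓ²-norm on `C¹(G)`;
in particular it is unitary (bijective). -/
theorem statement0 (hG : G.Connected) (w₁ : G.Dart → ℂ)
    (hw₁ : ∀ u : V, ∑ e ∈ Finset.univ.filter (fun e : G.Dart => e.fst = u),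
      Complex.normSq (w₁ e) = 1) :
    (∀ ψ : G.Dart → ℂ,
      ∑ e : G.Dart, Complex.normSq (U1 G w₁ ψ e) = ∑ e : G.Dart, Complex.normSq (ψ e)) ∧
    Function.Bijective (U1 G w₁) := by
  have hU : U1 G w₁ = flipOp G ∘ reflOp G w₁ := rfl
  rw [hU]
  refine ⟨fun ψ => ?_,
    (flipOp_involutive G).bijective.comp (reflOp_involutive G w₁ hw₁).bijective⟩
  rw [Function.comp_apply, sum_normSq_flipOp,
    ← Finset.sum_fiberwise Finset.univ (fun e : G.Dart => e.snd),
    ← Finset.sum_fiberwise Finset.univ (fun e : G.Dart => e.snd)]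
  exact Finset.sum_congr rfl fun u _ => sum_normSq_reflOp_snd G w₁ hw₁ ψ u

end
end

section
/- Suppose w₂ : A → (0,∞) satisfies Σ_{e : o(e)=u} w₂(e) = 1 for every vertex u, and m_V : V → (0,∞) satisfies the extended detailed balance condition m_V(o(e)) w₂(e) = m_V(t(e)) w₂(ē) for every arc e; set m_A(e) = m_V(o(e)) w₂(e) (Setting 2). Then the operator U₂ = S(2 d₂* d₂ − 1) preserves the weighted norm: ‖U₂ψ‖_{m_A} = ‖ψ‖_{m_A} for every ψ ∈ C¹(G). -/
/-!
Detailed balance says that the arc measure is invariant under reversal, so the flip is an isometry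
and it suffices to treat `2 d₂* d₂ - 1`. Detailed balance also rewrites the measure of an arc `e`
with terminus `u` as `m_V(u) w₂(ē)`, and the weights `w₂(ē)` of the arcs ending at `u` sum to `1`.
On the fibre of arcs ending at `u` the operator is therefore reflection about the weighted mean
`(d₂ψ)(u)`, which preserves the weighted sum of squares (`sum_reflection`). Summing over `u` gives
the claim.
-/

noncomputable section

open Finset

variable {V : Type*} [Fintype V] [DecidableEq V] (G : SimpleGraph V) [DecidableRel G.Adj]

/-- The boundary operator `(d₂ψ)(u) = Σ_{e : t(e)=u} w₂(ē) ψ(e)` of Setting 2. -/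
def bd2 (w₂ : G.Dart → ℝ) (ψ : G.Dart → ℂ) : V → ℂ :=
  fun u => ∑ e ∈ Finset.univ.filter (fun e : G.Dart => e.snd = u),
    (w₂ e.symm : ℂ) * ψ e

/-- The coboundary operator `(d₂*f)(e) = f(t(e))` of Setting 2. -/
def cobd2 (f : V → ℂ) : G.Dart → ℂ := fun e => f e.snd

/-- The Szegedy-walk operator `U₂ = S(2 d₂* d₂ − 1)` of Setting 2. -/
def U2 (w₂ : G.Dart → ℝ) (ψ : G.Dart → ℂ) : G.Dart → ℂ :=
  flipOp G (fun e => 2 * cobd2 G (bd2 G w₂ ψ) e - ψ e)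

/-- The arc measure `m_A(e) = m_V(o(e)) w₂(e)` of Setting 2. -/
def mArc (w₂ : G.Dart → ℝ) (mV : V → ℝ) (e : G.Dart) : ℝ := mV e.fst * w₂ e

/-- Reflection of a finite family of complex numbers about its mean with respect to weights of
total mass `1` preserves the weighted sum of squared moduli. -/
theorem sum_reflection {ι : Type*} (s : Finset ι) (p : ι → ℝ) (z : ι → ℂ)
    (hp : ∑ i ∈ s, p i = 1) :
    ∑ i ∈ s, Complex.normSq (2 * (∑ j ∈ s, (p j : ℂ) * z j) - z i) * p i
      = ∑ i ∈ s, Complex.normSq (z i) * p i := by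
  set a : ℂ := ∑ j ∈ s, (p j : ℂ) * z j with ha
  have hre : ∑ i ∈ s, p i * (z i).re = a.re := by simp [ha]
  have him : ∑ i ∈ s, p i * (z i).im = a.im := by simp [ha]
  have key : ∀ i ∈ s, Complex.normSq (2 * a - z i) * p i
      = Complex.normSq (z i) * p i + (4 * (a.re ^ 2 + a.im ^ 2) * p i
        - 4 * a.re * (p i * (z i).re) - 4 * a.im * (p i * (z i).im)) := by
    intro i _
    simp [Complex.normSq_apply]
    ring
  rw [Finset.sum_congr rfl key, Finset.sum_add_distrib, Finset.sum_sub_distrib,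
    Finset.sum_sub_distrib, ← Finset.mul_sum, ← Finset.mul_sum, ← Finset.mul_sum, hp, hre, him]
  ring

/-- Under Setting 2 (`w₂ > 0` with `Σ_{e : o(e)=u} w₂(e) = 1` for every `u`,
`m_V > 0` with the extended detailed balance condition `m_V(o(e)) w₂(e) = m_V(t(e)) w₂(ē)`,
and `m_A(e) = m_V(o(e)) w₂(e)`), the operator `U₂ = S(2 d₂* d₂ − 1)` preserves the
weighted norm `‖·‖_{m_A}`. -/
theorem statement1 (hG : G.Connected) (w₂ : G.Dart → ℝ) (mV : V → ℝ)
    (hw₂pos : ∀ e : G.Dart, 0 < w₂ e)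
    (hw₂ : ∀ u : V, ∑ e ∈ Finset.univ.filter (fun e : G.Dart => e.fst = u), w₂ e = 1)
    (hmVpos : ∀ u : V, 0 < mV u)
    (hdb : ∀ e : G.Dart, mV e.fst * w₂ e = mV e.snd * w₂ e.symm) :
    ∀ ψ : G.Dart → ℂ,
      ∑ e : G.Dart, Complex.normSq (U2 G w₂ ψ e) * mArc G w₂ mV e
        = ∑ e : G.Dart, Complex.normSq (ψ e) * mArc G w₂ mV e := by
  intro ψ
  have hm : ∀ e : G.Dart, mArc G w₂ mV e = mV e.snd * w₂ e.symm := hdb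
  -- Weights of arcs ending at `u` sum to `1`, by reversing arcs.
  have hp : ∀ u : V, ∑ e ∈ Finset.univ.filter (fun e : G.Dart => e.snd = u), w₂ e.symm = 1 := by
    intro u
    rw [← hw₂ u]
    refine Finset.sum_nbij' (fun e => e.symm) (fun e => e.symm) ?_ ?_ ?_ ?_ ?_ <;> simp
  have hflip : ∑ e : G.Dart, Complex.normSq (U2 G w₂ ψ e) * mArc G w₂ mV e
      = ∑ e : G.Dart, Complex.normSq (2 * bd2 G w₂ ψ e.snd - ψ e) * mArc G w₂ mV e := by
    refine Finset.sum_nbij' (fun e => e.symm) (fun e => e.symm) ?_ ?_ ?_ ?_ ?_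
    · simp
    · simp
    · simp
    · simp
    · intro e _
      have h : mArc G w₂ mV e = mArc G w₂ mV e.symm := hm e
      rw [← h]
      rfl
  rw [hflip, ← Finset.sum_fiberwise Finset.univ (fun e : G.Dart => e.snd),
    ← Finset.sum_fiberwise Finset.univ (fun e : G.Dart => e.snd)
      (fun e => Complex.normSq (ψ e) * mArc G w₂ mV e)]
  refine Finset.sum_congr rfl fun u _ => ?_
  have hu := congrArg (mV u * ·) (sum_reflection
    (Finset.univ.filter (fun e : G.Dart => e.snd = u)) (fun e => w₂ e.symm) ψ (hp u))
  simp only [Finset.mul_sum] at hu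
  refine Eq.trans (Finset.sum_congr rfl fun e he => ?_)
    (hu.trans (Finset.sum_congr rfl fun e he => ?_))
  · have h := (Finset.mem_filter.mp he).2
    rw [hm, h, bd2, Finset.mul_sum]
    ring
  · have h := (Finset.mem_filter.mp he).2
    rw [hm, h]
    ring

end
end

section
/- The operator W = S(c d*d − 1) satisfies the intertwining relations W d* = (cc'−1) S d* and W S d* = c S d* (d S d*) − d*; equivalently, W [d* | Sd*] = [d* | Sd*] T̃ where T̃ is the block operator [[0, −1_V],[(cc'−1)·1_V, c·dSd*]]. -/
/-!
The hypothesis on `c'` says exactly that `d d* = c'·1_V` (`bdW_cobdW`). Hence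
`W d* = S (c d* (d d*) - d*) = (c c' - 1) S d*`, while `S² = 1` gives
`W S d* = c S d* d S d* - S² d* = c S d* (d S d*) - d*`.
-/

noncomputable section

open Finset

variable {V : Type*} [Fintype V] [DecidableEq V] (G : SimpleGraph V) [DecidableRel G.Adj]

/-- The boundary operator `(dψ)(u) = Σ_{e : t(e)=u} conj(w(ē)) ψ(e)`. -/
def bdW (w : G.Dart → ℂ) (ψ : G.Dart → ℂ) : V → ℂ :=
  fun u => ∑ e ∈ Finset.univ.filter (fun e : G.Dart => e.snd = u),
    (starRingEnd ℂ) (w e.symm) * ψ e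

/-- The coboundary operator `(d*f)(e) = f(t(e)) m_V(t(e)) w(ē) / m_A(e)`, adjoint of `d`
with respect to the weighted inner products. -/
def cobdW (w : G.Dart → ℂ) (mV : V → ℝ) (mA : G.Dart → ℝ) (f : V → ℂ) : G.Dart → ℂ :=
  fun e => f e.snd * (mV e.snd : ℂ) * w e.symm / (mA e : ℂ)

/-- The operator `W = S(c d*d − 1)` on `C¹(G)`. -/
def Wop (w : G.Dart → ℂ) (mV : V → ℝ) (mA : G.Dart → ℝ) (c : ℂ) (ψ : G.Dart → ℂ) :
    G.Dart → ℂ :=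
  flipOp G (fun e => c * cobdW G w mV mA (bdW G w ψ) e - ψ e)

/-- The scaled coisometry identity `d d* = c'·1_V`: since `f (t(e)) = f u` for every arc `e` ending at
`u`, the value `f u` factors out of the sum, which is then the normalisation sum at `u`. -/
theorem bdW_cobdW (w : G.Dart → ℂ) (mV : V → ℝ) (mA : G.Dart → ℝ) (c' : ℝ)
    (hc' : ∀ u : V, ∑ e ∈ Finset.univ.filter (fun e : G.Dart => e.snd = u),
      mV u * Complex.normSq (w e.symm) / mA e = c') (f : V → ℂ) :
    bdW G w (cobdW G w mV mA f) = fun u => (c' : ℂ) * f u := by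
  funext u
  rw [← hc' u]
  push_cast
  rw [Finset.sum_mul]
  refine Finset.sum_congr rfl fun e he => ?_
  obtain rfl := (Finset.mem_filter.mp he).2
  simp only [cobdW, Complex.normSq_eq_conj_mul_self]
  ring

/-- `W = S(c d*d − 1)` satisfies the intertwining relations
`W d* = (cc'−1) S d*` and `W S d* = c S d* (d S d*) − d*`. -/
theorem statement4 (hG : G.Connected) (w : G.Dart → ℂ) (mV : V → ℝ) (mA : G.Dart → ℝ)
    (hmVpos : ∀ u : V, 0 < mV u) (hmApos : ∀ e : G.Dart, 0 < mA e)
    (c : ℂ) (c' : ℝ)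
    (hc' : ∀ u : V, ∑ e ∈ Finset.univ.filter (fun e : G.Dart => e.snd = u),
      mV u * Complex.normSq (w e.symm) / mA e = c') :
    ∀ f : V → ℂ,
      (Wop G w mV mA c (cobdW G w mV mA f)
        = fun e => (c * (c' : ℂ) - 1) * cobdW G w mV mA f e.symm) ∧
      (Wop G w mV mA c (flipOp G (cobdW G w mV mA f))
        = fun e => c * cobdW G w mV mA (bdW G w (flipOp G (cobdW G w mV mA f))) e.symm
            - cobdW G w mV mA f e) := by
  intro f
  have hd := bdW_cobdW G w mV mA c' hc' f
  refine ⟨?_, ?_⟩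
  · funext e
    simp only [Wop, flipOp, hd]
    simp only [cobdW]
    ring
  · funext e
    simp only [Wop, flipOp, SimpleGraph.Dart.symm_symm]

end
end

section
/- Let 𝓛 = d*(C⁰(G)) + S d*(C⁰(G)). Then the orthogonal complement of 𝓛 in C¹(G) with respect to ⟨·,·⟩_{m_A} equals ker(d) ∩ ker(dS), and for every ψ ∈ ker(d) ∩ ker(dS) one has W(ψ − Sψ) = ψ − Sψ and W(ψ + Sψ) = −(ψ + Sψ). In particular, every ψ ∈ 𝓛^⊥ with Sψ = −ψ satisfies Wψ = ψ and every ψ ∈ 𝓛^⊥ with Sψ = ψ satisfies Wψ = −ψ. -/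
/-!
The operator `cobdW` is the adjoint of `bdW` for the weighted inner products (`cobdW_adjoint`), and
since `mA` is invariant under arc reversal, the flip is self-adjoint on `C¹(G)`. So `ψ` is
orthogonal to `d*f + S d*g` for all `f, g` exactly when `⟨f, dψ⟩ + ⟨g, dSψ⟩ = 0` for all `f, g`,
that is, when `dψ = dSψ = 0`. On `ker d` the operator `W` reduces to `-S` (`Wop_of_bdW_eq_zero`),
and all the eigenvector statements follow from this and `S² = 1`.
-/

noncomputable section

open Finset

variable {V : Type*} [Fintype V] [DecidableEq V] (G : SimpleGraph V) [DecidableRel G.Adj]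

/-- The subspace `𝓛 = d*(C⁰(G)) + S d*(C⁰(G)) ⊆ C¹(G)`, as a set. -/
def Lsub (w : G.Dart → ℂ) (mV : V → ℝ) (mA : G.Dart → ℝ) : Set (G.Dart → ℂ) :=
  {ψ | ∃ f g : V → ℂ, ψ = fun e => cobdW G w mV mA f e + cobdW G w mV mA g e.symm}

/-- The orthogonal complement of `𝓛` in `C¹(G)` with respect to `⟨·,·⟩_{m_A}`, as a set. -/
def LsubPerp (w : G.Dart → ℂ) (mV : V → ℝ) (mA : G.Dart → ℝ) : Set (G.Dart → ℂ) :=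
  {ψ | ∀ χ ∈ Lsub G w mV mA,
    ∑ e : G.Dart, (starRingEnd ℂ) (χ e) * ψ e * (mA e : ℂ) = 0}

theorem cobdW_adjoint (w : G.Dart → ℂ) (mV : V → ℝ) (mA : G.Dart → ℝ)
    (hmApos : ∀ e : G.Dart, 0 < mA e) (f : V → ℂ) (ψ : G.Dart → ℂ) :
    ∑ e : G.Dart, (starRingEnd ℂ) (cobdW G w mV mA f e) * ψ e * (mA e : ℂ) =
      ∑ u : V, (starRingEnd ℂ) (f u) * bdW G w ψ u * (mV u : ℂ) := by
  rw [← Finset.sum_fiberwise (s := Finset.univ) (g := fun e : G.Dart => e.snd)]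
  refine Finset.sum_congr rfl fun u _ => ?_
  simp only [bdW, Finset.mul_sum, Finset.sum_mul]
  refine Finset.sum_congr rfl fun e he => ?_
  obtain rfl : e.snd = u := (Finset.mem_filter.mp he).2
  have h : (mA e : ℂ) ≠ 0 := Complex.ofReal_ne_zero.mpr (hmApos e).ne'
  simp only [cobdW, map_div₀, map_mul, Complex.conj_ofReal]
  field_simp

/-- The arcs are summed in reverse, which moves the flip from `d*g` onto `ψ`. -/
theorem flip_cobdW_adjoint (w : G.Dart → ℂ) (mV : V → ℝ) (mA : G.Dart → ℝ)
    (hmApos : ∀ e : G.Dart, 0 < mA e) (hmAsymm : ∀ e : G.Dart, mA e.symm = mA e)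
    (g : V → ℂ) (ψ : G.Dart → ℂ) :
    ∑ e : G.Dart, (starRingEnd ℂ) (cobdW G w mV mA g e.symm) * ψ e * (mA e : ℂ) =
      ∑ u : V, (starRingEnd ℂ) (g u) * bdW G w (flipOp G ψ) u * (mV u : ℂ) := by
  rw [← cobdW_adjoint G w mV mA hmApos]
  refine Fintype.sum_equiv
    (Function.Involutive.toPerm _ (SimpleGraph.Dart.symm_involutive (G := G))) _ _ fun e => ?_
  simp [flipOp, hmAsymm]

theorem eq_zero_of_pairing_eq_zero (mV : V → ℝ) (hmVpos : ∀ u : V, 0 < mV u) (h : V → ℂ)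
    (hh : ∀ f : V → ℂ, ∑ u : V, (starRingEnd ℂ) (f u) * h u * (mV u : ℂ) = 0) : h = 0 := by
  funext u
  have := hh (Pi.single u 1)
  rw [Finset.sum_eq_single u (fun v _ hv => by simp [hv]) (by simp)] at this
  simpa [(hmVpos u).ne'] using this

theorem mem_LsubPerp_iff (w : G.Dart → ℂ) (mV : V → ℝ) (mA : G.Dart → ℝ)
    (hmVpos : ∀ u : V, 0 < mV u) (hmApos : ∀ e : G.Dart, 0 < mA e)
    (hmAsymm : ∀ e : G.Dart, mA e.symm = mA e) (ψ : G.Dart → ℂ) :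
    ψ ∈ LsubPerp G w mV mA ↔ bdW G w ψ = 0 ∧ bdW G w (flipOp G ψ) = 0 := by
  have key : ∀ f g : V → ℂ, ∑ e : G.Dart, (starRingEnd ℂ)
      (cobdW G w mV mA f e + cobdW G w mV mA g e.symm) * ψ e * (mA e : ℂ) =
      ∑ u : V, (starRingEnd ℂ) (f u) * bdW G w ψ u * (mV u : ℂ) +
        ∑ u : V, (starRingEnd ℂ) (g u) * bdW G w (flipOp G ψ) u * (mV u : ℂ) := fun f g => by
    rw [← cobdW_adjoint G w mV mA hmApos, ← flip_cobdW_adjoint G w mV mA hmApos hmAsymm,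
      ← Finset.sum_add_distrib]
    simp only [map_add, add_mul]
  constructor
  · intro h
    have h' : ∀ f g : V → ℂ, _ := fun f g => (key f g).symm.trans (h _ ⟨f, g, rfl⟩)
    exact ⟨eq_zero_of_pairing_eq_zero mV hmVpos _ fun f => by simpa using h' f 0,
      eq_zero_of_pairing_eq_zero mV hmVpos _ fun g => by simpa using h' 0 g⟩
  · rintro ⟨h₁, h₂⟩ χ ⟨f, g, rfl⟩
    rw [key, h₁, h₂]
    simp

theorem Wop_of_bdW_eq_zero (w : G.Dart → ℂ) (mV : V → ℝ) (mA : G.Dart → ℝ) (c : ℂ)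
    (ψ : G.Dart → ℂ) (h : bdW G w ψ = 0) :
    Wop G w mV mA c ψ = fun e => -(ψ e.symm) := by
  funext e
  simp [Wop, flipOp, cobdW, h]

theorem bdW_add (w ψ φ : G.Dart → ℂ) :
    bdW G w (fun e => ψ e + φ e) = bdW G w ψ + bdW G w φ := by
  funext u
  simp [bdW, mul_add, Finset.sum_add_distrib]

theorem bdW_sub (w ψ φ : G.Dart → ℂ) :
    bdW G w (fun e => ψ e - φ e) = bdW G w ψ - bdW G w φ := by
  funext u
  simp [bdW, mul_sub, Finset.sum_sub_distrib]

/-- The orthogonal complement of `𝓛` with respect to `⟨·,·⟩_{m_A}`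
equals `ker(d) ∩ ker(dS)`; for every `ψ ∈ ker(d) ∩ ker(dS)` one has
`W(ψ − Sψ) = ψ − Sψ` and `W(ψ + Sψ) = −(ψ + Sψ)`; in particular every `ψ ∈ 𝓛^⊥` with
`Sψ = −ψ` satisfies `Wψ = ψ` and every `ψ ∈ 𝓛^⊥` with `Sψ = ψ` satisfies `Wψ = −ψ`. -/
theorem statement8 (hG : G.Connected) (w : G.Dart → ℂ) (mV : V → ℝ) (mA : G.Dart → ℝ)
    (hmVpos : ∀ u : V, 0 < mV u) (hmApos : ∀ e : G.Dart, 0 < mA e)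
    (hmAsymm : ∀ e : G.Dart, mA e.symm = mA e)
    (c : ℂ) (c' : ℝ)
    (hc' : ∀ u : V, ∑ e ∈ Finset.univ.filter (fun e : G.Dart => e.snd = u),
      mV u * Complex.normSq (w e.symm) / mA e = c') :
    (LsubPerp G w mV mA = {ψ | bdW G w ψ = 0 ∧ bdW G w (flipOp G ψ) = 0}) ∧
    (∀ ψ : G.Dart → ℂ, bdW G w ψ = 0 → bdW G w (flipOp G ψ) = 0 →
      (Wop G w mV mA c (fun e => ψ e - ψ e.symm) = fun e => ψ e - ψ e.symm) ∧
      (Wop G w mV mA c (fun e => ψ e + ψ e.symm) = fun e => -(ψ e + ψ e.symm))) ∧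
    (∀ ψ ∈ LsubPerp G w mV mA,
      ((flipOp G ψ = fun e => -(ψ e)) → Wop G w mV mA c ψ = ψ) ∧
      (flipOp G ψ = ψ → Wop G w mV mA c ψ = fun e => -(ψ e))) := by
  refine ⟨Set.ext (mem_LsubPerp_iff G w mV mA hmVpos hmApos hmAsymm), fun ψ h₁ h₂ => ⟨?_, ?_⟩,
    fun ψ hψ => ?_⟩
  · rw [Wop_of_bdW_eq_zero]
    · funext e
      simp
    · exact (bdW_sub G w ψ (flipOp G ψ)).trans (by rw [h₁, h₂, sub_zero])
  · rw [Wop_of_bdW_eq_zero]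
    · funext e
      simp [add_comm]
    · exact (bdW_add G w ψ (flipOp G ψ)).trans (by rw [h₁, h₂, add_zero])
  · rw [Wop_of_bdW_eq_zero G w mV mA c ψ
      ((mem_LsubPerp_iff G w mV mA hmVpos hmApos hmAsymm ψ).mp hψ).1]
    refine ⟨fun h => funext fun e => ?_, fun h => funext fun e => ?_⟩
    · exact neg_eq_iff_eq_neg.mpr (congrFun h e)
    · exact congrArg Neg.neg (congrFun h e)

end
end

section
/- Under Setting 2, with L the Laplacian operator (Lf)(u) = Σ_{e : o(e)=u} w₂(e) f(t(e)) − f(u) and φ₂(x) = (x + x⁻¹)/2 − 1, the spectrum of U₂ = S(2 d₂* d₂ − 1), as a set, is: σ(U₂) = φ₂⁻¹(σ(L)) if G is a tree; σ(U₂) = φ₂⁻¹(σ(L)) ∪ {1} if G has exactly one independent cycle (i.e. |E| = |V|) and G is not bipartite; and σ(U₂) = φ₂⁻¹(σ(L)) ∪ {1, −1} otherwise. Here φ₂⁻¹(Y) = {z ∈ ℂ \ {0} : (z + z⁻¹)/2 − 1 ∈ Y}. -/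
/-!
Write `P = L + 1`, so that `(d₂ψ)(u)` is a weighted mean over arcs and `d₂ S d₂* = P`.

If `U₂ψ = zψ` and `g = d₂ψ`, applying the eigenvalue equation at `e` and at `ē` gives
`(z² - 1) ψ(e) = 2z g(o(e)) - 2 g(t(e))`, and then `(z² + 1) g = 2z P g` after applying `d₂`; this
settles all `z ≠ ±1` (`mem_phi2inv_of_mem_specA`). Conversely an eigenfunction `g` of `L` for
`φ₂(z)` produces the eigenfunction `z g(o(e)) - g(t(e))` of `U₂`, or `g(t(e))` if the former
vanishes (`phi2inv_subset_specA`). The constant function shows that `1` is always in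
`φ₂⁻¹(σ(L))`, and a 2-colouring gives `-1` when `G` is bipartite.

What remains is whether `-1 ∈ σ(U₂)`. Symmetric `ψ` with `d₂ψ = 0` are `(-1)`-eigenfunctions, and
they form the kernel of a map from `ℂ^E` to `ℂ^V`, nonzero if `|E| > |V|`
(`neg_one_mem_specA_of_card_lt`). If `G` is not bipartite, every `(-1)`-eigenfunction is of this
form, and the signless coboundary `g ↦ g(o(e)) + g(t(e))` is injective; when `|E| = |V|` it is
therefore surjective, and a symmetric `ψ` with `d₂ψ = 0` is orthogonal to its range, hence zero
(`neg_one_notMem_specA`). Finally, a connected graph is a tree unless `|E| ≥ |V|`.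
-/

noncomputable section

open Finset

variable {V : Type*} [Fintype V] [DecidableEq V] (G : SimpleGraph V) [DecidableRel G.Adj]

/-- The Laplacian `(Lf)(u) = Σ_{e : o(e)=u} w₂(e) f(t(e)) − f(u)` on `C⁰(G)`. -/
def Lap (w₂ : G.Dart → ℝ) (f : V → ℂ) : V → ℂ :=
  fun u => (∑ e ∈ Finset.univ.filter (fun e : G.Dart => e.fst = u),
    (w₂ e : ℂ) * f e.snd) - f u

/-- The set of eigenvalues of an operator on `C⁰(G)`. -/
def specV (M : (V → ℂ) → (V → ℂ)) : Set ℂ :=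
  {z : ℂ | ∃ f : V → ℂ, f ≠ 0 ∧ M f = fun u => z * f u}

/-- The set of eigenvalues of an operator on `C¹(G)`. -/
def specA (M : (G.Dart → ℂ) → (G.Dart → ℂ)) : Set ℂ :=
  {z : ℂ | ∃ ψ : G.Dart → ℂ, ψ ≠ 0 ∧ M ψ = fun e => z * ψ e}

/-- `φ₂⁻¹(Y) = {z ∈ ℂ \ {0} : (z + z⁻¹)/2 − 1 ∈ Y}`. -/
def phi2inv (Y : Set ℂ) : Set ℂ := {z : ℂ | z ≠ 0 ∧ (z + z⁻¹) / 2 - 1 ∈ Y}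

lemma sum_snd_eq_sum_fst (F : G.Dart → ℂ) (u : V) :
    ∑ e ∈ Finset.univ.filter (fun e : G.Dart => e.snd = u), F e =
      ∑ e ∈ Finset.univ.filter (fun e : G.Dart => e.fst = u), F e.symm := by
  refine Finset.sum_bij' (fun e _ => e.symm) (fun e _ => e.symm) ?_ ?_ ?_ ?_ ?_ <;> simp

lemma bd2_add_smul (w₂ : G.Dart → ℝ) (a b : ℂ) (ψ χ : G.Dart → ℂ) (u : V) :
    bd2 G w₂ (fun e => a * ψ e + b * χ e) u = a * bd2 G w₂ ψ u + b * bd2 G w₂ χ u := by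
  simp only [bd2, Finset.mul_sum, ← Finset.sum_add_distrib]
  exact Finset.sum_congr rfl fun e _ => by ring

/-- `d₂ S d₂* = L + 1`. -/
lemma bd2_fst (w₂ : G.Dart → ℝ) (f : V → ℂ) (u : V) :
    bd2 G w₂ (fun e => f e.fst) u = Lap G w₂ f u + f u := by
  simp only [bd2, Lap, sub_add_cancel]
  rw [sum_snd_eq_sum_fst]
  simp

/-- `d₂ d₂* = 1`. -/
lemma bd2_snd (w₂ : G.Dart → ℝ)
    (hw₂ : ∀ u : V, ∑ e ∈ Finset.univ.filter (fun e : G.Dart => e.fst = u), w₂ e = 1)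
    (f : V → ℂ) (u : V) :
    bd2 G w₂ (fun e => f e.snd) u = f u := by
  simp only [bd2]
  rw [sum_snd_eq_sum_fst]
  have h : ∀ e ∈ Finset.univ.filter (fun e : G.Dart => e.fst = u),
      ((w₂ e.symm.symm : ℝ) : ℂ) * f e.symm.snd = (w₂ e : ℂ) * f u := by
    intro e he
    have : e.fst = u := by simpa using he
    simp [this]
  rw [Finset.sum_congr rfl h, ← Finset.sum_mul, ← Complex.ofReal_sum, hw₂ u]
  simp

lemma U2_apply (w₂ : G.Dart → ℝ) (ψ : G.Dart → ℂ) (e : G.Dart) :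
    U2 G w₂ ψ e = 2 * bd2 G w₂ ψ e.fst - ψ e.symm := rfl

lemma bd2_zero (w₂ : G.Dart → ℝ) : bd2 G w₂ (fun _ => 0) = 0 := by
  funext u
  simp [bd2]

lemma phi2inv_subset_specA (w₂ : G.Dart → ℝ)
    (hw₂ : ∀ u : V, ∑ e ∈ Finset.univ.filter (fun e : G.Dart => e.fst = u), w₂ e = 1) :
    phi2inv (specV (Lap G w₂)) ⊆ specA G (U2 G w₂) := by
  rintro z ⟨hz, g, hg, hL⟩
  have hP : ∀ u, bd2 G w₂ (fun e => z * g e.fst + (-1) * g e.snd) u = (z ^ 2 - 1) / 2 * g u := by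
    intro u
    rw [bd2_add_smul, bd2_fst, bd2_snd G w₂ hw₂, hL]
    field_simp
    ring
  by_cases h0 : (fun e : G.Dart => z * g e.fst + (-1) * g e.snd) = fun _ => 0
  · -- `g(t(e)) = z g(o(e))` on every arc: this forces `z² = 1`, and `d₂* g` is an eigenfunction.
    have hz2 : z ^ 2 = 1 := by
      obtain ⟨u, hu⟩ := Function.ne_iff.1 hg
      have h := hP u
      rw [h0, bd2_zero] at h
      have h' : (z ^ 2 - 1) / 2 = 0 := by
        simpa using (mul_eq_zero.1 h.symm).resolve_right hu
      linear_combination 2 * h'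
    refine ⟨fun e => g e.snd, ?_, ?_⟩
    · intro h
      apply hg
      funext u
      rw [← bd2_snd G w₂ hw₂ g u, h]
      exact congrFun (bd2_zero G w₂) u
    · funext e
      rw [U2_apply, bd2_snd G w₂ hw₂]
      have h := congrFun h0 e
      simp only [SimpleGraph.Dart.symm_toProd, Prod.snd_swap] at h ⊢
      linear_combination (-g e.fst) * hz2 + z * h
  · refine ⟨_, h0, ?_⟩
    funext e
    rw [U2_apply, hP]
    simp only [SimpleGraph.Dart.symm_toProd, Prod.snd_swap, Prod.fst_swap]
    ring

lemma mem_phi2inv_of_mem_specA (w₂ : G.Dart → ℝ)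
    (hw₂ : ∀ u : V, ∑ e ∈ Finset.univ.filter (fun e : G.Dart => e.fst = u), w₂ e = 1)
    {z : ℂ} (hz : z ∈ specA G (U2 G w₂)) (h1 : z ≠ 1) (h2 : z ≠ -1) :
    z ∈ phi2inv (specV (Lap G w₂)) := by
  obtain ⟨ψ, hψ, hU⟩ := hz
  have hz2 : z ^ 2 - 1 ≠ 0 := by
    intro h
    rcases sq_eq_sq_iff_eq_or_eq_neg.1 ((sub_eq_zero.1 h).trans (one_pow 2).symm) with h | h
    exacts [h1 h, h2 h]
  set g := bd2 G w₂ ψ with hgdef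
  have key : ∀ e, (z ^ 2 - 1) * ψ e = 2 * z * g e.fst + (-2) * g e.snd := by
    intro e
    have ha := congrFun hU e
    have hb := congrFun hU e.symm
    rw [U2_apply] at ha hb
    simp only [SimpleGraph.Dart.symm_toProd, Prod.fst_swap, SimpleGraph.Dart.symm_symm] at ha hb
    linear_combination hb - z * ha
  have hg : g ≠ 0 := by
    intro h
    apply hψ
    funext e
    have := key e
    rw [h] at this
    simpa [hz2] using this
  have hgP : ∀ u, (z ^ 2 + 1) * g u = 2 * z * (Lap G w₂ g u + g u) := by
    intro u
    have h : bd2 G w₂ (fun e => (z ^ 2 - 1) * ψ e + 0 * ψ e) u =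
        bd2 G w₂ (fun e => 2 * z * g e.fst + (-2) * g e.snd) u := by
      congr 1
      funext e
      rw [← key e]
      ring
    rw [bd2_add_smul, bd2_add_smul, bd2_fst, bd2_snd G w₂ hw₂, ← hgdef] at h
    linear_combination h
  have hz0 : z ≠ 0 := by
    rintro rfl
    apply hg
    funext u
    simpa using hgP u
  refine ⟨hz0, g, hg, ?_⟩
  funext u
  have := hgP u
  field_simp
  linear_combination -this

lemma one_mem_phi2inv [Nonempty V] (w₂ : G.Dart → ℝ)
    (hw₂ : ∀ u : V, ∑ e ∈ Finset.univ.filter (fun e : G.Dart => e.fst = u), w₂ e = 1) :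
    (1 : ℂ) ∈ phi2inv (specV (Lap G w₂)) := by
  refine ⟨one_ne_zero, fun _ => 1, ?_, ?_⟩
  · intro h
    simpa using congrFun h (Classical.arbitrary V)
  · funext u
    simp only [Lap, mul_one]
    rw [← Complex.ofReal_sum, hw₂ u]
    norm_num

lemma neg_one_mem_phi2inv [Nonempty V] (w₂ : G.Dart → ℝ)
    (hw₂ : ∀ u : V, ∑ e ∈ Finset.univ.filter (fun e : G.Dart => e.fst = u), w₂ e = 1)
    (hc : G.Colorable 2) :
    (-1 : ℂ) ∈ phi2inv (specV (Lap G w₂)) := by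
  obtain ⟨c⟩ := hc
  let s : Fin 2 → ℂ := fun i => if i = 0 then 1 else -1
  have hs : ∀ i j, i ≠ j → s j = - s i := by
    intro i j hij
    fin_cases i <;> fin_cases j <;> simp [s] at hij ⊢
  refine ⟨by norm_num, fun u => s (c u), ?_, ?_⟩
  · intro h
    have := congrFun h (Classical.arbitrary V)
    simp only [s, Pi.zero_apply] at this
    split_ifs at this <;> simp at this
  · funext u
    simp only [Lap]
    have h : ∀ e ∈ Finset.univ.filter (fun e : G.Dart => e.fst = u),
        (w₂ e : ℂ) * s (c e.snd) = (w₂ e : ℂ) * (- s (c u)) := by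
      intro e he
      have h1 : e.fst = u := by simpa using he
      rw [← h1, hs _ _ (c.valid e.adj)]
    rw [Finset.sum_congr rfl h, ← Finset.sum_mul, ← Complex.ofReal_sum, hw₂ u]
    norm_num
    ring

lemma neg_one_mem_specA_of_card_lt (w₂ : G.Dart → ℝ)
    (hcard : Fintype.card V < G.edgeFinset.card) :
    (-1 : ℂ) ∈ specA G (U2 G w₂) := by
  let D : (G.edgeSet → ℂ) →ₗ[ℂ] (V → ℂ) :=
    { toFun := fun ξ => bd2 G w₂ (fun a => ξ ⟨a.edge, a.edge_mem⟩)
      map_add' := by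
        intro x y
        funext u
        simpa using bd2_add_smul G w₂ 1 1 (fun a => x ⟨a.edge, a.edge_mem⟩)
          (fun a => y ⟨a.edge, a.edge_mem⟩) u
      map_smul' := by
        intro r x
        funext u
        simpa using bd2_add_smul G w₂ r 0 (fun a => x ⟨a.edge, a.edge_mem⟩)
          (fun a => x ⟨a.edge, a.edge_mem⟩) u }
  have hker : LinearMap.ker D ≠ ⊥ := by
    apply LinearMap.ker_ne_bot_of_finrank_lt
    rw [Module.finrank_fintype_fun_eq_card, Module.finrank_fintype_fun_eq_card]
    simpa [SimpleGraph.edgeFinset_card] using hcard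
  obtain ⟨ξ, hξ, hne⟩ := Submodule.exists_mem_ne_zero_of_ne_bot hker
  have hD : bd2 G w₂ (fun a => ξ ⟨a.edge, a.edge_mem⟩) = 0 := hξ
  refine ⟨fun a => ξ ⟨a.edge, a.edge_mem⟩, ?_, ?_⟩
  · intro h
    apply hne
    funext ⟨e, he⟩
    induction e using Sym2.ind with
    | _ x y => exact congrFun h ⟨(x, y), he⟩
  · funext e
    rw [U2_apply, hD]
    simp

lemma eq_zero_of_alternating (hG : G.Connected) (hc : ¬ G.Colorable 2) (g : V → ℂ)
    (hg : ∀ a : G.Dart, g a.fst + g a.snd = 0) : g = 0 := by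
  by_contra hne
  obtain ⟨v, hv⟩ := Function.ne_iff.1 hne
  replace hv : g v ≠ 0 := hv
  have hadj : ∀ x y, G.Adj x y → g x + g y = 0 := fun x y h => hg ⟨(x, y), h⟩
  have hpm : ∀ u, g u = g v ∨ g u = - g v := by
    intro u
    obtain ⟨p⟩ := hG.preconnected u v
    induction p with
    | nil => exact Or.inl rfl
    | cons h p ih =>
      have := hadj _ _ h
      rcases ih hv with h' | h'
      · right; linear_combination this - h'
      · left; linear_combination this - h'
  apply hc
  let c : G.Coloring Bool := SimpleGraph.Coloring.mk (fun u => decide (g u = g v)) (by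
    intro x y h heq
    have hxy := hadj _ _ h
    have heq : g x = g v ↔ g y = g v := by simpa using heq
    apply hv
    rcases hpm x with h' | h'
    · have := heq.1 h'
      linear_combination (hxy - h' - this) / 2
    · rcases hpm y with h'' | h''
      · have := heq.2 h''
        linear_combination (hxy - h'' - this) / 2
      · linear_combination -(hxy - h' - h'') / 2)
  simpa using c.colorable

/-- On a connected non-bipartite graph with `|E| = |V|`, the signless coboundary
`g ↦ g(o(e)) + g(t(e))` maps onto the symmetric functions on arcs. -/
lemma exists_signless_primitive (hG : G.Connected) (hc : ¬ G.Colorable 2)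
    (hcard : G.edgeFinset.card = Fintype.card V) (χ : G.Dart → ℂ)
    (hχ : ∀ a : G.Dart, χ a.symm = χ a) :
    ∃ g : V → ℂ, ∀ a : G.Dart, g a.fst + g a.snd = χ a := by
  have hex : ∀ e : G.edgeSet, ∃ a : G.Dart, a.edge = e := by
    rintro ⟨e, he⟩
    induction e using Sym2.ind with
    | _ x y => exact ⟨⟨(x, y), he⟩, rfl⟩
  choose d hd using hex
  have hdd : ∀ a : G.Dart, d ⟨a.edge, a.edge_mem⟩ = a ∨ d ⟨a.edge, a.edge_mem⟩ = a.symm :=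
    fun a => SimpleGraph.dart_edge_eq_iff _ _ |>.1 (hd ⟨a.edge, a.edge_mem⟩)
  let T : (V → ℂ) →ₗ[ℂ] (G.edgeSet → ℂ) :=
    { toFun := fun g e => g (d e).fst + g (d e).snd
      map_add' := by
        intro x y
        funext e
        simp only [Pi.add_apply]
        ring
      map_smul' := by
        intro r x
        funext e
        simp only [Pi.smul_apply, smul_eq_mul, RingHom.id_apply]
        ring }
  have hT : ∀ g (a : G.Dart), T g ⟨a.edge, a.edge_mem⟩ = g a.fst + g a.snd := by
    intro g a
    change g (d _).fst + g (d _).snd = _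
    rcases hdd a with h | h <;> rw [h]
    simp [add_comm]
  have hinj : Function.Injective T := by
    rw [← LinearMap.ker_eq_bot, LinearMap.ker_eq_bot']
    intro g hg
    refine eq_zero_of_alternating G hG hc g fun a => ?_
    rw [← hT, hg]
    rfl
  have hsurj : Function.Surjective T := by
    refine (LinearMap.injective_iff_surjective_of_finrank_eq_finrank ?_).1 hinj
    rw [Module.finrank_fintype_fun_eq_card, Module.finrank_fintype_fun_eq_card, ← hcard]
    simp [SimpleGraph.edgeFinset_card]
  obtain ⟨g, hg⟩ := hsurj fun e => χ (d e)
  refine ⟨g, fun a => ?_⟩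
  rw [← hT, hg]
  rcases hdd a with h | h
  · simp only [h]
  · simp only [h, hχ]

/-- Detailed balance makes the kernel of `d₂` orthogonal to the range of `d₂*`. -/
lemma sum_snd_mul_eq_zero (w₂ : G.Dart → ℝ) (mV : V → ℝ)
    (hdb : ∀ e : G.Dart, mV e.fst * w₂ e = mV e.snd * w₂ e.symm)
    (ψ : G.Dart → ℂ) (hψ : bd2 G w₂ ψ = 0) (g : V → ℂ) :
    ∑ e : G.Dart, ((mV e.fst * w₂ e : ℝ) : ℂ) * (g e.snd * ψ e) = 0 := by
  rw [← Finset.sum_fiberwise Finset.univ (fun e : G.Dart => e.snd)]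
  refine Finset.sum_eq_zero fun u _ => ?_
  have h : ∀ e ∈ Finset.univ.filter (fun e : G.Dart => e.snd = u),
      ((mV e.fst * w₂ e : ℝ) : ℂ) * (g e.snd * ψ e) =
        (mV u : ℂ) * g u * ((w₂ e.symm : ℂ) * ψ e) := by
    intro e he
    have h1 : e.snd = u := by simpa using he
    rw [hdb e, h1]
    push_cast
    ring
  rw [Finset.sum_congr rfl h, ← Finset.mul_sum]
  have : ∑ e ∈ Finset.univ.filter (fun e : G.Dart => e.snd = u), (w₂ e.symm : ℂ) * ψ e = 0 :=
    congrFun hψ u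
  rw [this, mul_zero]

lemma neg_one_notMem_specA (hG : G.Connected) (w₂ : G.Dart → ℝ) (mV : V → ℝ)
    (hw₂pos : ∀ e : G.Dart, 0 < w₂ e) (hmVpos : ∀ u : V, 0 < mV u)
    (hdb : ∀ e : G.Dart, mV e.fst * w₂ e = mV e.snd * w₂ e.symm)
    (hcard : G.edgeFinset.card = Fintype.card V) (hc : ¬ G.Colorable 2) :
    (-1 : ℂ) ∉ specA G (U2 G w₂) := by
  rintro ⟨ψ, hψ, hU⟩
  have hU' : ∀ e, 2 * bd2 G w₂ ψ e.fst - ψ e.symm = -1 * ψ e := fun e => congrFun hU e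
  -- The equations at `e` and `ē` show that `d₂ψ` changes sign along every edge.
  have hd : bd2 G w₂ ψ = 0 := by
    refine eq_zero_of_alternating G hG hc _ fun a => ?_
    have h1 := hU' a
    have h2 := hU' a.symm
    simp only [SimpleGraph.Dart.symm_toProd, Prod.fst_swap, SimpleGraph.Dart.symm_symm] at h1 h2
    linear_combination (h1 + h2) / 2
  have hsym : ∀ a : G.Dart, ψ a.symm = ψ a := by
    intro a
    have h := hU' a
    rw [hd] at h
    simp only [Pi.zero_apply] at h
    linear_combination -h
  obtain ⟨g, hg⟩ := exists_signless_primitive G hG hc hcard (fun a => star (ψ a))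
    (fun a => by rw [hsym])
  have hs := sum_snd_mul_eq_zero G w₂ mV hdb ψ hd g
  have hf : ∑ e : G.Dart, ((mV e.fst * w₂ e : ℝ) : ℂ) * (g e.fst * ψ e) = 0 := by
    rw [← hs]
    refine Fintype.sum_equiv ⟨SimpleGraph.Dart.symm, SimpleGraph.Dart.symm,
      fun a => a.symm_symm, fun a => a.symm_symm⟩ _ _ fun e => ?_
    simp [hsym, hdb e]
  have hsum : ∑ e : G.Dart, (mV e.fst * w₂ e) * Complex.normSq (ψ e) = 0 := by
    have h := congrArg₂ (· + ·) hf hs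
    simp only [← Finset.sum_add_distrib, add_zero] at h
    rw [← Complex.ofReal_inj]
    push_cast
    rw [← h]
    refine Finset.sum_congr rfl fun e _ => ?_
    rw [← mul_add, ← add_mul, hg, Complex.normSq_eq_conj_mul_self]
    push_cast
    rfl
  apply hψ
  funext e
  have hpos : ∀ e : G.Dart, 0 < mV e.fst * w₂ e := fun e => mul_pos (hmVpos _) (hw₂pos _)
  have h := (Finset.sum_eq_zero_iff_of_nonneg
    (fun e _ => mul_nonneg (hpos e).le (Complex.normSq_nonneg (ψ e)))).1 hsum e (Finset.mem_univ e)
  exact Complex.normSq_eq_zero.1 ((mul_eq_zero.1 h).resolve_left (hpos e).ne')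

/-- The spectrum of `U₂ = S(2 d₂* d₂ − 1)` as a set: it is
`φ₂⁻¹(σ(L))` if `G` is a tree, `φ₂⁻¹(σ(L)) ∪ {1}` if `G` has exactly one independent
cycle (`|E| = |V|`) and is not bipartite, and `φ₂⁻¹(σ(L)) ∪ {1,−1}` otherwise. -/
theorem statement11 (hG : G.Connected) (w₂ : G.Dart → ℝ) (mV : V → ℝ)
    (hw₂pos : ∀ e : G.Dart, 0 < w₂ e)
    (hw₂ : ∀ u : V, ∑ e ∈ Finset.univ.filter (fun e : G.Dart => e.fst = u), w₂ e = 1)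
    (hmVpos : ∀ u : V, 0 < mV u)
    (hdb : ∀ e : G.Dart, mV e.fst * w₂ e = mV e.snd * w₂ e.symm) :
    (G.IsTree →
      specA G (U2 G w₂) = phi2inv (specV (Lap G w₂))) ∧
    ((G.edgeFinset.card = Fintype.card V ∧ ¬ G.Colorable 2) →
      specA G (U2 G w₂) = phi2inv (specV (Lap G w₂)) ∪ {1}) ∧
    ((¬ G.IsTree ∧ ¬ (G.edgeFinset.card = Fintype.card V ∧ ¬ G.Colorable 2)) →
      specA G (U2 G w₂) = phi2inv (specV (Lap G w₂)) ∪ {1, -1}) := by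
  have hne : Nonempty V := hG.nonempty
  have hsub := phi2inv_subset_specA G w₂ hw₂
  have h1 := one_mem_phi2inv G w₂ hw₂
  have hback := fun z => mem_phi2inv_of_mem_specA G w₂ hw₂ (z := z)
  refine ⟨fun hT => ?_, fun ⟨hcard, hc⟩ => ?_, fun ⟨hT, hn⟩ => ?_⟩
  · have h2 := neg_one_mem_phi2inv G w₂ hw₂ hT.colorable_two
    refine Set.Subset.antisymm (fun z hz => ?_) hsub
    by_cases hz1 : z = 1
    · exact hz1 ▸ h1
    by_cases hz2 : z = -1
    · exact hz2 ▸ h2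
    exact hback z hz hz1 hz2
  · have h2 := neg_one_notMem_specA G hG w₂ mV hw₂pos hmVpos hdb hcard hc
    refine Set.Subset.antisymm (fun z hz => ?_) (Set.union_subset hsub ?_)
    · by_cases hz1 : z = 1
      · exact Or.inr hz1
      · exact Or.inl (hback z hz hz1 fun h => h2 (h ▸ hz))
    · rintro z rfl
      exact hsub h1
  · have h2 : (-1 : ℂ) ∈ specA G (U2 G w₂) := by
      have hle := hG.card_vert_le_card_edgeSet_add_one
      have hne' : Nat.card G.edgeSet + 1 ≠ Nat.card V := fun h =>
        hT (SimpleGraph.isTree_iff_connected_and_card.2 ⟨hG, h⟩)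
      rw [Nat.card_eq_fintype_card, Nat.card_eq_fintype_card,
        ← SimpleGraph.edgeFinset_card] at hle hne'
      by_cases hcard : G.edgeFinset.card = Fintype.card V
      · have hc : G.Colorable 2 := by
          by_contra hc
          exact hn ⟨hcard, hc⟩
        exact hsub (neg_one_mem_phi2inv G w₂ hw₂ hc)
      · exact neg_one_mem_specA_of_card_lt G w₂ (by omega)
    refine Set.Subset.antisymm (fun z hz => ?_) (Set.union_subset hsub ?_)
    · by_cases hz1 : z = 1
      · exact Or.inr (Or.inl hz1)
      by_cases hz2 : z = -1
      · exact Or.inr (Or.inr hz2)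
      exact Or.inl (hback z hz hz1 hz2)
    · rintro z (rfl | rfl)
      exacts [hsub h1, h2]

end
end

section
/- Suppose G is κ-regular, all edge lengths are equal (L_e = L for all e ∈ A) and all vertex constants are equal (α_u = α for all u ∈ V). Then the quantum graph walk operator satisfies Ũ = e^{ikL} S(c d*d − 1), where c = 2κ/(κ + i q) with q = α/k, and d is the boundary operator with weight w(e) = 1/√κ and m_V ≡ 1, m_A ≡ 1, i.e. (dψ)(u) = (1/√κ) Σ_{e : t(e)=u} ψ(e) and (d*f)(e) = (1/√κ) f(t(e)). Moreover dd* = 1_V. -/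
/-!
The sum over the arcs `f` with `t(f) = o(e)` splits as `τ Σ ψ(f) − ψ(ē)`, because `ē` is the only
arc in that range on which the Kronecker delta is nonzero. With equal lengths and vertex constants
on a `κ`-regular graph, `τ = 2/(κ + iq)`, while `(d*dψ)(ē) = κ⁻¹ Σ ψ(f)` as `t(ē) = o(e)`; since
`κ ≠ 0`, the two constants agree: `c κ⁻¹ = τ`. The identity `dd* = 1` says that exactly `κ` arcs
end at each vertex, which follows from `SimpleGraph.dart_fst_fiber_card_eq_degree` by reversing
arcs.
-/

noncomputable section

open Finset

variable {V : Type*} [Fintype V] [DecidableEq V] (G : SimpleGraph V) [DecidableRel G.Adj]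

/-- The quantum graph walk operator
`(Ũψ)(e) = e^{ikL_e} Σ_{f : t(f)=o(e)} (τ_{o(e)} − δ_{f,ē}) ψ(f)`,
where `τ_u = 2/(deg(u) + i α_u / k)`. -/
def Utilde (k : ℝ) (Le : G.Dart → ℝ) (au : V → ℝ) (ψ : G.Dart → ℂ) : G.Dart → ℂ :=
  fun e => Complex.exp (Complex.I * (k : ℂ) * (Le e : ℂ)) *
    ∑ f ∈ Finset.univ.filter (fun f : G.Dart => f.snd = e.fst),
      (2 / ((G.degree e.fst : ℂ) + Complex.I * (au e.fst : ℂ) / (k : ℂ))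
        - if f = e.symm then 1 else 0) * ψ f

/-- The boundary operator `(dψ)(u) = (1/√κ) Σ_{e : t(e)=u} ψ(e)` (weight `w ≡ 1/√κ`,
`m_V ≡ 1`, `m_A ≡ 1`). -/
def dQG (κ : ℕ) (ψ : G.Dart → ℂ) : V → ℂ :=
  fun u => (1 / (Real.sqrt κ : ℂ)) *
    ∑ e ∈ Finset.univ.filter (fun e : G.Dart => e.snd = u), ψ e

/-- The coboundary operator `(d*f)(e) = (1/√κ) f(t(e))`. -/
def dQGstar (κ : ℕ) (f : V → ℂ) : G.Dart → ℂ :=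
  fun e => (1 / (Real.sqrt κ : ℂ)) * f e.snd

theorem card_filter_dart_snd (u : V) :
    (Finset.univ.filter (fun e : G.Dart => e.snd = u)).card = G.degree u := by
  rw [← G.dart_fst_fiber_card_eq_degree u]
  exact Finset.card_bij' (fun e _ => e.symm) (fun e _ => e.symm)
    (by simp) (by simp) (by simp) (by simp)

theorem one_div_sqrt_mul_self (κ : ℕ) :
    (1 / (Real.sqrt κ : ℂ)) * (1 / (Real.sqrt κ : ℂ)) = 1 / (κ : ℂ) := by
  rw [div_mul_div_comm, one_mul, ← Complex.ofReal_mul, Real.mul_self_sqrt (Nat.cast_nonneg κ),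
    Complex.ofReal_natCast]

/-- If `G` is `κ`-regular, all edge lengths equal `L` and all vertex
constants equal `α`, then `Ũ = e^{ikL} S(c d*d − 1)` with `c = 2κ/(κ + iq)`, `q = α/k`;
moreover `dd* = 1_V`. -/
theorem statement12 (hG : G.Connected) (κ : ℕ) (hκ : 0 < κ)
    (hreg : G.IsRegularOfDegree κ)
    (k L α : ℝ) (hk : 0 < k) (hL : 0 < L) (hα : 0 ≤ α)
    (Le : G.Dart → ℝ) (au : V → ℝ)
    (hLe : ∀ e : G.Dart, Le e = L) (hau : ∀ u : V, au u = α) :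
    (∀ (ψ : G.Dart → ℂ) (e : G.Dart),
      Utilde G k Le au ψ e
        = Complex.exp (Complex.I * (k : ℂ) * (L : ℂ)) *
          ((2 * (κ : ℂ) / ((κ : ℂ) + Complex.I * ((α / k : ℝ) : ℂ)))
              * dQGstar G κ (dQG G κ ψ) e.symm
            - ψ e.symm)) ∧
    (∀ (f : V → ℂ) (u : V), dQG G κ (dQGstar G κ f) u = f u) := by
  have hκ' : (κ : ℂ) ≠ 0 := Nat.cast_ne_zero.mpr hκ.ne'
  refine ⟨fun ψ e => ?_, fun f u => ?_⟩
  · simp only [Utilde, dQG, dQGstar, hLe, hau, hreg.degree_eq, sub_mul, ite_mul, one_mul, zero_mul,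
      Finset.sum_sub_distrib, ← Finset.mul_sum, Finset.sum_ite_eq']
    rw [if_pos (by simp), ← mul_assoc (1 / (Real.sqrt κ : ℂ)), one_div_sqrt_mul_self]
    have hs : e.symm.snd = e.fst := rfl
    rw [hs, Complex.ofReal_div, mul_div_assoc Complex.I]
    -- The denominator `κ + iq` is carried along unchanged, so only `κ ≠ 0` is needed.
    generalize (κ : ℂ) + Complex.I * ((α : ℂ) / (k : ℂ)) = D
    rw [← mul_assoc, show 2 * (κ : ℂ) / D * (1 / (κ : ℂ)) = 2 / D by
      rw [mul_one_div, div_right_comm, mul_div_cancel_right₀ _ hκ']]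
  · have hsum : ∑ e ∈ Finset.univ.filter (fun e : G.Dart => e.snd = u),
        (1 / (Real.sqrt κ : ℂ)) * f e.snd = (κ : ℂ) * ((1 / (Real.sqrt κ : ℂ)) * f u) := by
      rw [← hreg.degree_eq u, ← card_filter_dart_snd, ← nsmul_eq_mul]
      refine Finset.sum_eq_card_nsmul fun e he => ?_
      rw [(Finset.mem_filter.mp he).2]
    simp only [dQG, dQGstar]
    rw [hsum, mul_left_comm, ← mul_assoc (1 / (Real.sqrt κ : ℂ)), one_div_sqrt_mul_self,
      ← mul_assoc, mul_one_div_cancel hκ', one_mul]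


end
end

section
/- The quantum graph has a non-trivial solution if and only if 1 ∈ σ(Ũ); that is, there exists a nonzero a ∈ ℂ^A satisfying the boundary conditions (for every vertex u there is θ_u ∈ ℂ with φ_e(0) = θ_u for all arcs e with o(e) = u, and Σ_{f : o(f)=u} φ_f'(0) = α_u θ_u) if and only if 1 is an eigenvalue of Ũ. -/
/-!
Given amplitudes `a`, the wave on the arc `e` arrives at `t(e)` with amplitude
`ψ(e) = a_e e^{ikL_e}`, and `a ↦ ψ` is a bijection of `ℂ^A`. Because `L_ē = L_e`, continuity at `u`
reads `a_f = θ_u - ψ(f̄)` for all `f` with `o(f) = u`. Substituting this, the derivative condition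
becomes `(deg u + i α_u / k) θ_u = 2 ∑_{t(f) = u} ψ(f)`, that is `θ_u = τ_u ∑_{t(f) = u} ψ(f)`
(`derivative_condition_iff`). Hence the boundary conditions say exactly that
`ψ(e) = e^{ikL_e} (τ_u ∑_{t(f) = u} ψ(f) - ψ(ē))` with `u = o(e)`, and the right-hand side is
`(Ũψ)(e)` (`Utilde_apply_eq`). At an isolated vertex, where `τ_u` may have a zero denominator, the
conditions hold with `θ_u = 0`.
-/

noncomputable section

open Finset

variable {V : Type*} [Fintype V] [DecidableEq V] (G : SimpleGraph V) [DecidableRel G.Adj]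

/-- Sum of the amplitudes `ψ(f)` over the arcs `f` with terminus `u`, indexed by the reversed arcs. -/
def incomingSum (ψ : G.Dart → ℂ) (u : V) : ℂ :=
  ∑ f ∈ Finset.univ.filter (fun f : G.Dart => f.fst = u), ψ f.symm

theorem Utilde_apply_eq (k : ℝ) (Le : G.Dart → ℝ) (au : V → ℝ) (ψ : G.Dart → ℂ) (e : G.Dart) :
    Utilde G k Le au ψ e = Complex.exp (Complex.I * (k : ℂ) * (Le e : ℂ)) *
      (2 / ((G.degree e.fst : ℂ) + Complex.I * (au e.fst : ℂ) / (k : ℂ)) *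
        incomingSum G ψ e.fst - ψ e.symm) := by
  have hsum : incomingSum G ψ e.fst =
      ∑ f ∈ Finset.univ.filter (fun f : G.Dart => f.snd = e.fst), ψ f := by
    unfold incomingSum
    refine Finset.sum_nbij' (fun f => f.symm) (fun f => f.symm) ?_ ?_ ?_ ?_ ?_ <;> simp
  have hmem : e.symm ∈ Finset.univ.filter (fun f : G.Dart => f.snd = e.fst) := by simp
  unfold Utilde
  simp only [sub_mul, Finset.sum_sub_distrib, ite_mul, one_mul, zero_mul, Finset.sum_ite_eq',
    if_pos hmem, hsum, Finset.mul_sum]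

/-- The denominator of `τ_u` vanishes only at isolated vertices, since its real part is `deg u`. -/
theorem tau_denominator_ne_zero (k : ℝ) (α : ℝ) {u : V} (hu : G.degree u ≠ 0) :
    (G.degree u : ℂ) + Complex.I * (α : ℂ) / (k : ℂ) ≠ 0 := by
  intro h
  have hre := congrArg Complex.re h
  simp only [Complex.add_re, Complex.natCast_re, Complex.div_ofReal_re, Complex.mul_re,
    Complex.I_re, Complex.I_im, Complex.ofReal_re, Complex.ofReal_im, Complex.zero_re] at hre
  exact hu (by simpa using hre)

/-- Under the continuity condition `a_f = θ - ψ(f̄)` at a non-isolated vertex `u`, the derivative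
condition at `u` determines the vertex value: `θ = τ_u ∑_{t(f) = u} ψ(f)`. -/
theorem derivative_condition_iff {k : ℝ} (hk : k ≠ 0) (α : ℝ) {u : V} (hu : G.degree u ≠ 0)
    (a ψ : G.Dart → ℂ) (θ : ℂ) (ha : ∀ f : G.Dart, f.fst = u → a f = θ - ψ f.symm) :
    ∑ f ∈ Finset.univ.filter (fun f : G.Dart => f.fst = u),
        Complex.I * (k : ℂ) * (a f - ψ f.symm) = (α : ℂ) * θ ↔
      θ = 2 / ((G.degree u : ℂ) + Complex.I * (α : ℂ) / (k : ℂ)) * incomingSum G ψ u := by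
  have hkC : (k : ℂ) ≠ 0 := by exact_mod_cast hk
  have hden := tau_denominator_ne_zero G k α hu
  have hsum : ∑ f ∈ Finset.univ.filter (fun f : G.Dart => f.fst = u),
      Complex.I * (k : ℂ) * (a f - ψ f.symm) =
      Complex.I * k * (G.degree u * θ - 2 * incomingSum G ψ u) := by
    have hcard : (Finset.univ.filter (fun f : G.Dart => f.fst = u)).card = G.degree u :=
      G.dart_fst_fiber_card_eq_degree u
    rw [← hcard, ← nsmul_eq_mul, ← Finset.sum_const, incomingSum, Finset.mul_sum (a := 2),
      ← Finset.sum_sub_distrib, Finset.mul_sum]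
    refine Finset.sum_congr rfl fun f hf => ?_
    rw [ha f (Finset.mem_filter.mp hf).2]
    ring
  -- Multiplying by `ik` turns the `α`-term of the denominator of `τ_u` into `-α`.
  have hkey : Complex.I * k * (G.degree u * θ - 2 * incomingSum G ψ u) - α * θ =
      Complex.I * k * (θ * ((G.degree u : ℂ) + Complex.I * (α : ℂ) / (k : ℂ))
        - 2 * incomingSum G ψ u) := by
    field_simp
    linear_combination (-(α : ℂ) * θ) * Complex.I_sq
  rw [hsum, ← sub_eq_zero, hkey, mul_eq_zero, or_iff_right (mul_ne_zero Complex.I_ne_zero hkC),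
    sub_eq_zero, div_mul_eq_mul_div, eq_div_iff hden]

theorem degree_fst_ne_zero (e : G.Dart) : G.degree e.fst ≠ 0 :=
  ((G.degree_pos_iff_exists_adj e.fst).mpr ⟨e.snd, e.adj⟩).ne'

/-- The quantum graph has a non-trivial solution (a nonzero `a ∈ ℂ^A`
satisfying the boundary conditions, where `φ_e(0) = a_e + a_ē e^{ikL_e}` and
`φ_e'(0) = ik(a_e − a_ē e^{ikL_e})`) if and only if `1` is an eigenvalue of `Ũ`. -/
theorem statement14 (hG : G.Connected)
    (k : ℝ) (hk : 0 < k) (Le : G.Dart → ℝ) (au : V → ℝ)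
    (hLepos : ∀ e : G.Dart, 0 < Le e)
    (hLesymm : ∀ e : G.Dart, Le e.symm = Le e)
    (hau : ∀ u : V, 0 ≤ au u) :
    (∃ a : G.Dart → ℂ, a ≠ 0 ∧ ∀ u : V, ∃ θ : ℂ,
      (∀ e : G.Dart, e.fst = u →
        a e + a e.symm * Complex.exp (Complex.I * (k : ℂ) * (Le e : ℂ)) = θ) ∧
      (∑ f ∈ Finset.univ.filter (fun f : G.Dart => f.fst = u),
          Complex.I * (k : ℂ) *
            (a f - a f.symm * Complex.exp (Complex.I * (k : ℂ) * (Le f : ℂ)))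
        = (au u : ℂ) * θ)) ↔
    (∃ ψ : G.Dart → ℂ, ψ ≠ 0 ∧ Utilde G k Le au ψ = ψ) := by
  set E : G.Dart → ℂ := fun e => Complex.exp (Complex.I * (k : ℂ) * (Le e : ℂ)) with hE
  have hE0 : ∀ e, E e ≠ 0 := fun e => Complex.exp_ne_zero _
  have hEs : ∀ e : G.Dart, E e.symm = E e := fun e => by simp only [hE, hLesymm]
  have hU : ∀ ψ e, Utilde G k Le au ψ e = E e *
      (2 / ((G.degree e.fst : ℂ) + Complex.I * (au e.fst : ℂ) / (k : ℂ)) *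
        incomingSum G ψ e.fst - ψ e.symm) := Utilde_apply_eq G k Le au
  change (∃ a : G.Dart → ℂ, a ≠ 0 ∧ ∀ u : V, ∃ θ : ℂ,
      (∀ e : G.Dart, e.fst = u → a e + a e.symm * E e = θ) ∧
      (∑ f ∈ Finset.univ.filter (fun f : G.Dart => f.fst = u),
          Complex.I * (k : ℂ) * (a f - a f.symm * E f) = (au u : ℂ) * θ)) ↔ _
  constructor
  · rintro ⟨a, ha0, ha⟩
    refine ⟨fun e => a e * E e, fun h => ha0 (funext fun e => ?_), funext fun e => ?_⟩
    · simpa [hE0 e] using congrFun h e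
    · obtain ⟨θ, hcont, hder⟩ := ha e.fst
      have hcont' : ∀ f : G.Dart, f.fst = e.fst → a f = θ - a f.symm * E f.symm := fun f hf => by
        rw [hEs]
        exact eq_sub_of_add_eq (hcont f hf)
      have hθ := (derivative_condition_iff G hk.ne' (au e.fst) (degree_fst_ne_zero G e)
        a (fun f => a f * E f) θ hcont').mp (by simpa only [hEs] using hder)
      rw [hU, ← hθ, ← hcont' e rfl, mul_comm]
  · rintro ⟨ψ, hψ0, hψ⟩
    have hscale : ∀ f : G.Dart, ψ f.symm / E f.symm * E f = ψ f.symm := fun f => by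
      rw [hEs, div_mul_cancel₀ _ (hE0 f)]
    refine ⟨fun e => ψ e / E e, fun h => hψ0 (funext fun e => ?_), fun u => ?_⟩
    · simpa [hE0 e] using congrFun h e
    · simp only [hscale]
      by_cases hu : G.degree u = 0
      · -- No arc starts at an isolated vertex, so both conditions hold with `θ = 0`.
        have hno : ∀ f : G.Dart, f.fst ≠ u := fun f hf => degree_fst_ne_zero G f (hf ▸ hu)
        exact ⟨0, fun e he => absurd he (hno e), by simp [hno]⟩
      · have hcont : ∀ f : G.Dart, f.fst = u → ψ f / E f =
            2 / ((G.degree u : ℂ) + Complex.I * (au u : ℂ) / (k : ℂ)) * incomingSum G ψ u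
              - ψ f.symm := by
          rintro f rfl
          rw [div_eq_iff (hE0 f), mul_comm, ← hU, hψ]
        exact ⟨_, fun f hf => by rw [hcont f hf, sub_add_cancel],
          (derivative_condition_iff G hk.ne' (au u) hu (fun e => ψ e / E e) ψ _ hcont).mpr rfl⟩

end
end

section
/- Let G be a finite connected κ-regular simple graph with κ ≥ 3 and girth g(G) ≥ 5. Then the positive support of the cube of the Grover matrix satisfies (U³)⁺ = (U⁺)³ + ᵀ(U⁺), where ᵀ(U⁺) denotes the transpose of U⁺. -/
/-!
Write `f = (a, b)` and `e = (c, d)`. A nonzero term of `(U³)_{e,f}` corresponds to a walk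
`a, b, x, c, d`, i.e. to a common neighbour `x` of `b` and `c`, and has weight
`(2/κ - [a = x]) (2/κ - [b = c]) (2/κ - [x = d])`; the entries of `(U⁺)³` have the same expansion
with weights `[a ≠ x] [b ≠ c] [x ≠ d]` (`dartMatrix_pow_three`).

* If `b = c`, summing over the `κ` neighbours `x` of `b` gives `(2/κ - 1) [a = d] ≤ 0`, and both
  terms on the right-hand side vanish.
* If `b ≠ c`, girth at least `5` excludes 4-cycles, so there is at most one common neighbour `x`
  (`common_neighbor_unique`). Its weight is positive iff `x ≠ a, d`, which `(U⁺)³` detects, or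
  `x = a = d`. Since `a = d` is itself a common neighbour of `b` and `c`, the latter case
  is exactly the support of `ᵀ(U⁺)`.
-/

noncomputable section

open Finset Matrix

set_option linter.unusedSectionVars false

variable {V : Type*} [Fintype V] [DecidableEq V] (G : SimpleGraph V) [DecidableRel G.Adj]

/-- The Grover matrix of a `κ`-regular graph: `(U)_{e,f} = 2/κ − δ_{f,ē}` if
`t(f) = o(e)` and `0` otherwise. -/
def GroverM (κ : ℕ) : Matrix G.Dart G.Dart ℝ :=
  fun e f => if f.snd = e.fst then 2 / (κ : ℝ) - (if f = e.symm then 1 else 0) else 0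

/-- The positive support of a real matrix: `(N⁺)_{i,j} = 1` if `(N)_{i,j} > 0`,
else `0`. -/
def posSupp {ι : Type*} (N : Matrix ι ι ℝ) : Matrix ι ι ℝ :=
  fun i j => if 0 < N i j then 1 else 0

/-- The transition weight from the arc `(a, b)` to the arc `(c, d)`: zero unless `b = c`, and then
`p` if the step backtracks (`a = d`) and `q` otherwise. -/
def stepWeight (p q : ℝ) (a b c d : V) : ℝ :=
  if b = c then (if a = d then p else q) else 0

/-- The matrix on arcs with backtracking weight `p` and non-backtracking weight `q`. Both the
Grover matrix and its positive support are of this form. -/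
def dartMatrix (p q : ℝ) : Matrix G.Dart G.Dart ℝ :=
  fun e f => stepWeight p q f.fst f.snd e.fst e.snd

lemma dart_eq_symm_iff (e f : G.Dart) (h : f.snd = e.fst) : f = e.symm ↔ f.fst = e.snd := by
  rw [SimpleGraph.Dart.ext_iff, Prod.ext_iff]
  exact ⟨fun h' => h'.1, fun h' => ⟨h', h⟩⟩

lemma groverM_eq (κ : ℕ) : GroverM G κ = dartMatrix G (2 / (κ : ℝ) - 1) (2 / (κ : ℝ)) := by
  ext e f
  unfold GroverM dartMatrix stepWeight
  by_cases h : f.snd = e.fst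
  · simp only [h, if_true, dart_eq_symm_iff G e f h]
    split_ifs <;> simp
  · simp [h]

lemma posSupp_dartMatrix {p q : ℝ} (hp : p ≤ 0) (hq : 0 < q) :
    posSupp (dartMatrix G p q) = dartMatrix G 0 1 := by
  ext e f
  unfold posSupp dartMatrix stepWeight
  split_ifs <;> first | rfl | linarith

lemma sum_dart (F : V → V → ℝ) :
    ∑ d : G.Dart, F d.fst d.snd = ∑ u, ∑ v, if G.Adj u v then F u v else 0 := by
  rw [← Fintype.sum_prod_type' (f := fun u v => if G.Adj u v then F u v else 0),
    ← Finset.sum_filter]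
  refine Finset.sum_bij (fun d _ => d.toProd) ?_ ?_ ?_ ?_
  · intro d _
    simp
  · intro d _ d' _ h
    exact SimpleGraph.Dart.ext _ _ h
  · intro x hx
    exact ⟨⟨x, by simpa using hx⟩, Finset.mem_univ _, rfl⟩
  · intro d _
    rfl

/-- Entries of the cube as a sum over the middle vertex `x` of the walk
`f.fst, f.snd, x, e.fst, e.snd`. -/
lemma dartMatrix_pow_three (p q : ℝ) (e f : G.Dart) :
    (dartMatrix G p q ^ 3) e f = ∑ x, if G.Adj f.snd x ∧ G.Adj x e.fst then
      (if f.fst = x then p else q) * (if f.snd = e.fst then p else q) *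
        (if x = e.snd then p else q) else 0 := by
  -- `g` is the last intermediate arc, so that `g.fst` is the middle vertex.
  have h2 : ∀ g : G.Dart, (dartMatrix G p q * dartMatrix G p q) g f =
      if G.Adj f.snd g.fst then
        (if f.snd = g.snd then p else q) * (if f.fst = g.fst then p else q) else 0 := by
    intro g
    rw [Matrix.mul_apply]
    unfold dartMatrix
    rw [sum_dart G (fun u v => stepWeight p q u v g.fst g.snd *
      stepWeight p q f.fst f.snd u v), Finset.sum_eq_single f.snd, Finset.sum_eq_single g.fst]
    · simp [stepWeight]
    · intro v _ hv
      simp [stepWeight, hv]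
    · simp
    · intro u _ hu
      simp [stepWeight, hu.symm]
    · simp
  rw [pow_succ', pow_two, Matrix.mul_apply]
  simp only [h2]
  unfold dartMatrix
  rw [sum_dart G (fun u v => stepWeight p q u v e.fst e.snd * if G.Adj f.snd u then
        (if f.snd = v then p else q) * (if f.fst = u then p else q) else 0)]
  refine Finset.sum_congr rfl fun x _ => ?_
  rw [Finset.sum_eq_single e.fst]
  · by_cases h1 : G.Adj f.snd x <;> by_cases h2 : G.Adj x e.fst <;>
      simp [stepWeight, h1, h2]
    split_ifs <;> ring
  · intro v _ hv
    simp [stepWeight, hv]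
  · simp

/-- Two different common neighbours of distinct vertices would span a 4-cycle. -/
lemma common_neighbor_unique (hgirth : 5 ≤ G.girth) {b c x y : V} (hbc : b ≠ c)
    (hbx : G.Adj b x) (hxc : G.Adj x c) (hby : G.Adj b y) (hyc : G.Adj y c) : x = y := by
  by_contra hxy
  let w : G.Walk b b := .cons hbx (.cons hxc (.cons hyc.symm (.cons hby.symm .nil)))
  have hw : w.IsCycle := by
    have := hbx.ne
    have := hxc.ne
    have := hby.ne
    have := hyc.ne
    rw [SimpleGraph.Walk.isCycle_def, SimpleGraph.Walk.isTrail_def]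
    simp only [w, SimpleGraph.Walk.edges_cons, SimpleGraph.Walk.edges_nil,
      SimpleGraph.Walk.support_cons, SimpleGraph.Walk.support_nil, List.tail_cons]
    refine ⟨?_, by simp, ?_⟩ <;> simp <;> grind
  have := hw.girth_le_length
  simp [w] at this
  omega

/-- The row sum governing the case `b = c`: the unitarity relation for the Grover coin. -/
lemma sum_grover_weights (κ : ℕ) (hκ : 3 ≤ κ) (hreg : G.IsRegularOfDegree κ) {a b d : V}
    (ha : G.Adj b a) (hd : G.Adj b d) :
    (∑ x, if G.Adj b x then (if a = x then 2 / (κ : ℝ) - 1 else 2 / (κ : ℝ)) *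
      (if x = d then 2 / (κ : ℝ) - 1 else 2 / (κ : ℝ)) else 0) = if a = d then 1 else 0 := by
  have hκ0 : (κ : ℝ) ≠ 0 := by positivity
  have hcard : (∑ x, if G.Adj b x then (1 : ℝ) else 0) = κ := by
    rw [← hreg b, Finset.sum_boole, ← SimpleGraph.card_neighborFinset_eq_degree,
      SimpleGraph.neighborFinset_eq_filter]
  have hexp : ∀ x, (if G.Adj b x then (if a = x then 2 / (κ : ℝ) - 1 else 2 / (κ : ℝ)) *
      (if x = d then 2 / (κ : ℝ) - 1 else 2 / (κ : ℝ)) else 0) =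
      (2 / (κ : ℝ)) ^ 2 * (if G.Adj b x then (1 : ℝ) else 0)
        - 2 / (κ : ℝ) * (if a = x then 1 else 0) - 2 / (κ : ℝ) * (if x = d then 1 else 0)
        + (if a = x then (if a = d then 1 else 0) else 0) := by
    intro x
    by_cases h1 : a = x
    · subst h1
      by_cases h2 : a = d <;> simp [h2, ha, hd] <;> ring
    · by_cases h2 : x = d
      · subst h2
        simp [h1, hd]
        ring
      · by_cases h3 : G.Adj b x <;> simp [h1, h2, h3]
        ring
  simp only [hexp, Finset.sum_add_distrib, Finset.sum_sub_distrib, ← Finset.mul_sum, hcard]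
  simp
  field_simp
  ring

/-- For a finite connected `κ`-regular graph with `κ ≥ 3` and girth
at least `5`, `(U³)⁺ = (U⁺)³ + ᵀ(U⁺)`. -/
theorem statement15 (hG : G.Connected) (κ : ℕ) (hκ : 3 ≤ κ)
    (hreg : G.IsRegularOfDegree κ) (hgirth : 5 ≤ G.girth) :
    posSupp ((GroverM G κ) ^ 3)
      = (posSupp (GroverM G κ)) ^ 3 + (posSupp (GroverM G κ))ᵀ := by
  have hκ3 : (3 : ℝ) ≤ κ := by exact_mod_cast hκ
  have hq : 0 < 2 / (κ : ℝ) := by positivity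
  have hp : 2 / (κ : ℝ) - 1 < 0 := by
    rw [sub_neg, div_lt_one (by linarith)]
    linarith
  rw [groverM_eq, posSupp_dartMatrix G hp.le hq]
  ext e f
  rw [Matrix.add_apply, Matrix.transpose_apply, dartMatrix_pow_three]
  unfold posSupp
  rw [dartMatrix_pow_three]
  unfold dartMatrix stepWeight
  have hf : G.Adj f.snd f.fst := f.adj.symm
  have he : G.Adj e.fst e.snd := e.adj
  by_cases hbc : f.snd = e.fst
  · have hsum := sum_grover_weights G κ hκ hreg hf (hbc ▸ he : G.Adj f.snd e.snd)
    have hle : (∑ x, if G.Adj f.snd x ∧ G.Adj x e.fst then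
        (if f.fst = x then 2 / (κ : ℝ) - 1 else 2 / (κ : ℝ)) *
        (if f.snd = e.fst then 2 / (κ : ℝ) - 1 else 2 / (κ : ℝ)) *
        (if x = e.snd then 2 / (κ : ℝ) - 1 else 2 / (κ : ℝ)) else 0) ≤ 0 := by
      calc _ = (2 / (κ : ℝ) - 1) * (if f.fst = e.snd then 1 else 0) := by
            rw [← hsum, Finset.mul_sum]
            refine Finset.sum_congr rfl fun x _ => ?_
            simp only [← hbc, G.adj_comm x f.snd, and_self, if_true]
            split_ifs <;> ring
        _ ≤ 0 := by split_ifs <;> linarith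
    rw [if_neg hle.not_gt]
    simp [hbc]
  · by_cases hx : ∃ x, G.Adj f.snd x ∧ G.Adj x e.fst
    · obtain ⟨x, hbx, hxc⟩ := hx
      have huniq : ∀ y, G.Adj f.snd y ∧ G.Adj y e.fst → y = x := fun y hy =>
        common_neighbor_unique G hgirth hbc hy.1 hy.2 hbx hxc
      have hcollapse : ∀ F : V → ℝ,
          (∑ y, if G.Adj f.snd y ∧ G.Adj y e.fst then F y else 0) = F x := by
        intro F
        rw [Finset.sum_eq_single x]
        · simp [hbx, hxc]
        · intro y _ hy
          exact if_neg fun h => hy (huniq y h)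
        · simp
      rw [hcollapse, hcollapse]
      have had : e.snd = f.fst → f.fst = x := fun h => huniq _ ⟨hf, h ▸ he.symm⟩
      simp only [hbc, Ne.symm hbc, if_false]
      by_cases h1 : f.fst = x
      · by_cases h2 : x = e.snd
        · have h3 : e.snd = f.fst := (h1.trans h2).symm
          have : 0 < (2 / (κ : ℝ) - 1) * (2 / κ) * (2 / κ - 1) := by
            have := mul_pos (mul_pos_of_neg_of_neg hp hp) hq
            linarith
          simp only [if_pos h1, if_pos h2, if_pos h3, if_pos this]
          simp
        · have h3 : e.snd ≠ f.fst := fun h => h2 (h1.symm.trans h.symm)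
          have : ¬ 0 < (2 / (κ : ℝ) - 1) * (2 / κ) * (2 / κ) := by
            have := mul_pos (mul_pos (neg_pos.2 hp) hq) hq
            linarith
          simp only [if_pos h1, if_neg h2, if_neg h3, if_neg this]
          simp
      · have h3 : e.snd ≠ f.fst := fun h => h1 (had h)
        by_cases h2 : x = e.snd
        · have : ¬ 0 < (2 / (κ : ℝ)) * (2 / κ) * (2 / κ - 1) := by
            have := mul_pos (mul_pos (neg_pos.2 hp) hq) hq
            linarith
          simp only [if_neg h1, if_pos h2, if_neg h3, if_neg this]
          simp
        · have : 0 < (2 / (κ : ℝ)) * (2 / κ) * (2 / κ) := by positivity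
          simp only [if_neg h1, if_neg h2, if_neg h3, if_pos this]
          simp
    · have hzero : ∀ F : V → ℝ,
          (∑ y, if G.Adj f.snd y ∧ G.Adj y e.fst then F y else 0) = 0 := fun F =>
        Finset.sum_eq_zero fun y _ => if_neg fun h => hx ⟨y, h⟩
      have h3 : e.snd ≠ f.fst := fun h => hx ⟨_, hf, h ▸ he.symm⟩
      rw [hzero, hzero]
      simp [h3]

end
end

section
/- Let G be a finite connected κ-regular simple graph with κ ≥ 3 and girth g(G) ≥ 5, with adjacency matrix M. Then the characteristic polynomial of the positive support U⁺ of the Grover matrix factors as det(z·1_A − U⁺) = (z² − 1)^{|E| − |V|} · det(z²·1_V − z·M + (κ−1)·1_V). Equivalently, the spectrum of U⁺ (with algebraic multiplicities) consists of the roots s±(λ) = λ/2 ± √(λ² − 4κ + 4)/2 of z² − λz + (κ−1) = 0 for each eigenvalue λ of M (with multiplicity), together with 1 and −1, each with multiplicity |E| − |V|. -/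
/-!
This is the Ihara–Bass identity. Since `κ ≥ 3`, the entry `2/κ - 1` is negative, so the positive
support of the Grover matrix is the non-backtracking matrix `S * T - J`, where `S` and `T` record
the origins and the ends of the arcs and `J` is the arc-reversal permutation matrix
(`posSuppC_groverM`). From `T * S = M`, `T * J * S = κ • 1` and `J * J = 1` one gets
`(z - J) * (z - (S * T - J)) = (z² - 1) - (z - J) * S * T`, and exchanging the two factors
`(z - J) * S` and `T` under the determinant (`det_smul_one_add_mul_comm`) turns the right-hand side
into a `V × V` determinant. The remaining factor `det (z - J) = (z² - 1)^|E|` follows from the same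
exchange, because `1 + J = R * Rᵀ` and `Rᵀ * R = 2 • 1` for the arc-edge incidence matrix `R`.
All divisions are legitimate when `z² ≠ 1`; the two excluded values are reached by continuity.
-/


noncomputable section

open Finset Matrix

variable {V : Type*} [Fintype V] [DecidableEq V] (G : SimpleGraph V) [DecidableRel G.Adj]

/-- The positive support of a real matrix, viewed as a complex matrix. -/
def posSuppC {ι : Type*} (N : Matrix ι ι ℝ) : Matrix ι ι ℂ :=
  fun i j => if 0 < N i j then 1 else 0

/-- The determinant form of the fact that `A * B` and `B * A` have the same characteristic
polynomial up to a power of the variable. -/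
theorem det_smul_one_add_mul_comm {m n : Type*} [Fintype m] [DecidableEq m] [Fintype n]
    [DecidableEq n] (A : Matrix m n ℂ) (B : Matrix n m ℂ) {c : ℂ} (hc : c ≠ 0) :
    c ^ Fintype.card n * (c • (1 : Matrix m m ℂ) + A * B).det
      = c ^ Fintype.card m * (c • (1 : Matrix n n ℂ) + B * A).det := by
  have h1 : c • (1 : Matrix m m ℂ) + A * B = c • (1 + (c⁻¹ • A) * B) := by
    rw [smul_add, Matrix.smul_mul, smul_smul, mul_inv_cancel₀ hc, one_smul]
  have h2 : c • (1 : Matrix n n ℂ) + B * A = c • (1 + B * (c⁻¹ • A)) := by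
    rw [smul_add, Matrix.mul_smul, smul_smul, mul_inv_cancel₀ hc, one_smul]
  rw [h1, h2, Matrix.det_smul, Matrix.det_smul, Matrix.det_one_add_mul_comm]
  ring

/-- The arc-origin incidence matrix. -/
def originM : Matrix G.Dart V ℂ := fun e v => if e.fst = v then 1 else 0

/-- The arc-end incidence matrix, with the vertices as rows. -/
def endM : Matrix V G.Dart ℂ := fun v e => if e.snd = v then 1 else 0

/-- The permutation matrix of the arc reversal. -/
def revM : Matrix G.Dart G.Dart ℂ := fun e f => if f = e.symm then 1 else 0

/-- The incidence matrix between arcs and their underlying undirected edges. -/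
def arcEdgeM : Matrix G.Dart G.edgeSet ℂ := fun e a => if e.edge = a then 1 else 0

/-- The positive support of the Grover matrix is the non-backtracking matrix. -/
theorem posSuppC_groverM {κ : ℕ} (hκ : 3 ≤ κ) :
    posSuppC (GroverM G κ) = originM G * endM G - revM G := by
  have hpos : (0 : ℝ) < κ := by exact_mod_cast (by omega : 0 < κ)
  have h2 : (0 : ℝ) < 2 / κ := by positivity
  have h3 : ¬ (0 : ℝ) < 2 / κ - 1 := by
    have : (3 : ℝ) ≤ κ := by exact_mod_cast hκ
    rw [not_lt, sub_nonpos, div_le_one hpos]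
    linarith
  ext e f
  by_cases hf : f = e.symm
  · subst hf
    simp [posSuppC, GroverM, originM, endM, revM, Matrix.mul_apply, h3]
  · by_cases h : f.snd = e.fst
    · simp [posSuppC, GroverM, originM, endM, revM, Matrix.mul_apply, hf, h, h2]
    · simp [posSuppC, GroverM, originM, endM, revM, Matrix.mul_apply, hf, h, Ne.symm h]

theorem revM_mul_apply {n : Type*} (A : Matrix G.Dart n ℂ) (e : G.Dart) (i : n) :
    (revM G * A) e i = A e.symm i := by
  simp [revM, Matrix.mul_apply]

theorem revM_mul_revM : revM G * revM G = 1 := by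
  ext e f
  rw [revM_mul_apply]
  simp [revM, Matrix.one_apply, eq_comm]

theorem endM_mul_originM : endM G * originM G = G.adjMatrix ℂ := by
  ext v w
  simp only [endM, originM, Matrix.mul_apply, SimpleGraph.adjMatrix_apply, mul_ite, mul_one,
    mul_zero]
  by_cases h : G.Adj v w
  · rw [Finset.sum_eq_single (⟨(w, v), h.symm⟩ : G.Dart)]
    · simp [h]
    · intro e _ he
      by_contra hne
      apply he
      ext <;> simp <;> grind
    · simp
  · rw [if_neg h]
    apply Finset.sum_eq_zero
    intro e _
    by_contra hne
    have h1 : e.fst = w := by grind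
    have h2 : e.snd = v := by grind
    exact h (h1 ▸ h2 ▸ e.adj.symm)

theorem endM_mul_revM_mul_originM {κ : ℕ} (hreg : G.IsRegularOfDegree κ) :
    endM G * (revM G * originM G) = (κ : ℂ) • 1 := by
  ext v w
  simp only [Matrix.mul_apply (M := endM G), revM_mul_apply, Matrix.smul_apply, Matrix.one_apply]
  simp only [endM, originM, SimpleGraph.Dart.symm, Prod.fst_swap]
  by_cases h : v = w
  · subst h
    -- Reversal identifies the arcs ending at `v` with the arcs leaving `v`.
    have hc : (Finset.univ.filter fun e : G.Dart => e.snd = v).card = κ := by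
      rw [← hreg v, ← G.dart_fst_fiber_card_eq_degree v]
      exact Finset.card_bij' (fun e _ => e.symm) (fun e _ => e.symm) (by simp) (by simp)
        (by simp) (by simp)
    rw [if_pos rfl, smul_eq_mul, mul_one, ← hc, Finset.card_filter]
    push_cast
    refine Finset.sum_congr rfl fun e _ => ?_
    by_cases h : e.snd = v <;> simp [h]
  · rw [if_neg h, smul_zero]
    apply Finset.sum_eq_zero
    intro e _
    by_cases h1 : e.snd = v <;> by_cases h2 : e.snd = w <;> simp_all

theorem arcEdgeM_mul_transpose : arcEdgeM G * (arcEdgeM G)ᵀ = 1 + revM G := by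
  ext e f
  have hsum : (arcEdgeM G * (arcEdgeM G)ᵀ) e f = if f.edge = e.edge then 1 else 0 := by
    simp only [Matrix.mul_apply, Matrix.transpose_apply, arcEdgeM]
    rw [Finset.sum_eq_single (⟨e.edge, e.edge_mem⟩ : G.edgeSet)]
    · simp
    · intro a _ ha
      rw [if_neg (fun h => ha (Subtype.ext h.symm)), zero_mul]
    · simp
  rw [hsum, Matrix.add_apply, Matrix.one_apply, revM]
  have hiff := SimpleGraph.dart_edge_eq_iff f e
  have hne := e.symm_ne
  by_cases h1 : f = e
  · subst h1
    simp [hne.symm]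
  · by_cases h2 : f = e.symm
    · subst h2
      simp [hne.symm]
    · simp [hiff, h1, h2, Ne.symm h1]

theorem arcEdgeM_transpose_mul : (arcEdgeM G)ᵀ * arcEdgeM G = (2 : ℂ) • 1 := by
  ext a b
  simp only [Matrix.mul_apply, Matrix.transpose_apply, arcEdgeM, Matrix.smul_apply,
    Matrix.one_apply]
  by_cases h : a = b
  · subst h
    have hc := G.dart_edge_fiber_card a.1 a.2
    have hc' : ((Finset.univ.filter fun d : G.Dart => d.edge = a.1).card : ℂ) = 2 := by
      rw [hc]; norm_num
    simp [← ite_and, hc']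
  · have h' : (a : Sym2 V) ≠ b := fun hh => h (Subtype.ext hh)
    rw [if_neg h, smul_zero]
    apply Finset.sum_eq_zero
    intro e _
    by_cases h1 : e.edge = a <;> by_cases h2 : e.edge = b <;> simp_all

theorem det_smul_one_sub_revM {z : ℂ} (hz : z ^ 2 ≠ 1) :
    (z • (1 : Matrix G.Dart G.Dart ℂ) - revM G).det = (z ^ 2 - 1) ^ G.edgeFinset.card := by
  have hz1 : z + 1 ≠ 0 := fun h => hz (by linear_combination (z - 1) * h)
  have key := det_smul_one_add_mul_comm (-arcEdgeM G) (arcEdgeM G)ᵀ hz1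
  have e1 : (z + 1) • (1 : Matrix G.Dart G.Dart ℂ) + -arcEdgeM G * (arcEdgeM G)ᵀ
      = z • 1 - revM G := by
    rw [Matrix.neg_mul, arcEdgeM_mul_transpose]
    module
  have e2 : (z + 1) • (1 : Matrix G.edgeSet G.edgeSet ℂ) + (arcEdgeM G)ᵀ * -arcEdgeM G
      = (z - 1) • 1 := by
    rw [Matrix.mul_neg, arcEdgeM_transpose_mul]
    module
  rw [e1, e2, Matrix.det_smul, Matrix.det_one, mul_one, G.dart_card_eq_twice_card_edges,
    ← SimpleGraph.edgeFinset_card] at key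
  apply mul_left_cancel₀ (pow_ne_zero G.edgeFinset.card hz1)
  rw [key, show z ^ 2 - 1 = (z + 1) * (z - 1) by ring, mul_pow, two_mul, pow_add]
  ring

/-- The identity away from the zeros `±1` of `z² - 1`, where the determinant exchange applies. -/
theorem det_smul_one_sub_posSuppC {κ : ℕ} (hκ : 3 ≤ κ) (hreg : G.IsRegularOfDegree κ) {z : ℂ}
    (hz : z ^ 2 ≠ 1) :
    (z • (1 : Matrix G.Dart G.Dart ℂ) - posSuppC (GroverM G κ)).det
      = (z ^ 2 - 1) ^ (G.edgeFinset.card - Fintype.card V) *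
        (z ^ 2 • (1 : Matrix V V ℂ) - z • G.adjMatrix ℂ + ((κ : ℂ) - 1) • 1).det := by
  have hw : z ^ 2 - 1 ≠ 0 := sub_ne_zero.mpr hz
  have key := det_smul_one_add_mul_comm (-((z • 1 - revM G) * originM G)) (endM G) hw
  have e1 : (z ^ 2 - 1) • (1 : Matrix G.Dart G.Dart ℂ)
        + -((z • 1 - revM G) * originM G) * endM G
      = (z • 1 - revM G) * (z • 1 - posSuppC (GroverM G κ)) := by
    have hJ : (z • 1 - revM G) * (z • 1 + revM G)
        = (z ^ 2 - 1) • (1 : Matrix G.Dart G.Dart ℂ) := by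
      simp only [sub_mul, mul_add, Matrix.smul_mul, Matrix.mul_smul, Matrix.one_mul,
        Matrix.mul_one, revM_mul_revM]
      module
    rw [posSuppC_groverM G hκ, ← hJ, Matrix.neg_mul, Matrix.mul_assoc, ← sub_eq_add_neg,
      ← Matrix.mul_sub]
    congr 1
    abel
  have e2 : (z ^ 2 - 1) • (1 : Matrix V V ℂ) + endM G * -((z • 1 - revM G) * originM G)
      = z ^ 2 • (1 : Matrix V V ℂ) - z • G.adjMatrix ℂ + ((κ : ℂ) - 1) • 1 := by
    rw [Matrix.mul_neg, Matrix.sub_mul, Matrix.mul_sub, endM_mul_revM_mul_originM G hreg,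
      Matrix.smul_mul, Matrix.one_mul, Matrix.mul_smul, endM_mul_originM]
    module
  rw [e1, e2, Matrix.det_mul, det_smul_one_sub_revM G hz, G.dart_card_eq_twice_card_edges] at key
  -- The handshake lemma bounds `|V|` by `|E|`, so the truncated exponent `|E| - |V|` is exact.
  have hcard : Fintype.card V ≤ G.edgeFinset.card := by
    have h := G.sum_degrees_eq_twice_card_edges
    simp only [hreg.degree_eq, Finset.sum_const, Finset.card_univ, smul_eq_mul] at h
    nlinarith
  obtain ⟨d, hd⟩ := Nat.exists_eq_add_of_le hcard
  apply mul_left_cancel₀ (pow_ne_zero (Fintype.card V + G.edgeFinset.card) hw)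
  rw [pow_add, mul_assoc, key, hd, Nat.add_sub_cancel_left]
  ring

/-- For a finite connected `κ`-regular graph with `κ ≥ 3` and girth
at least `5`, `det(z·1_A − U⁺) = (z² − 1)^{|E|−|V|} · det(z²·1_V − z·M + (κ−1)·1_V)`. -/
theorem statement17 (hG : G.Connected) (κ : ℕ) (hκ : 3 ≤ κ)
    (hreg : G.IsRegularOfDegree κ) (hgirth : 5 ≤ G.girth) :
    ∀ z : ℂ,
      (z • (1 : Matrix G.Dart G.Dart ℂ) - posSuppC (GroverM G κ)).det
        = (z ^ 2 - 1) ^ (G.edgeFinset.card - Fintype.card V) *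
          (z ^ 2 • (1 : Matrix V V ℂ) - z • G.adjMatrix ℂ + ((κ : ℂ) - 1) • 1).det := by
  refine congrFun (Continuous.ext_on (s := {z : ℂ | z ^ 2 ≠ 1}) ?_ ?_ ?_ fun z hz =>
    det_smul_one_sub_posSuppC G hκ hreg hz)
  · have hfin : ({1, -1} : Set ℂ).Finite := Set.toFinite _
    refine (hfin.countable.dense_compl ℂ).mono fun z hz => ?_
    simpa using hz
  · exact Continuous.matrix_det (by fun_prop)
  · exact Continuous.mul (by fun_prop) (Continuous.matrix_det (by fun_prop))

end
end

section
/- Let G be a finite connected κ-regular simple graph with κ ≥ 3 and girth g(G) ≥ 5, with adjacency matrix M. Then the characteristic polynomial of the positive support (U²)⁺ of the square of the Grover matrix factors as det(z·1_A − (U²)⁺) = (z − 2)^{2(|E| − |V|)} · det(z²·1_V − z·(M² − 2(κ−2)·1_V) + (M² + (κ−2)²·1_V)). Equivalently, the spectrum of (U²)⁺ (with algebraic multiplicities) consists of the roots s±(λ) = (λ² − 2κ + 4)/2 ± λ√(λ² − 4κ + 4)/2 of z² − (λ² − 2κ + 4)z + (λ² + (κ−2)²) = 0 for each eigenvalue λ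 of M (with multiplicity), together with the eigenvalue 2 with multiplicity 2(|E| − |V|). -/
/-!
For `κ ≥ 3` the positive support of `U` is the non-backtracking matrix `B = S T - J`, where `S`
and `T` are the arc-origin and terminus-arc incidence matrices and `J` is arc reversal. In a simple
graph an arc sequence `f, g, e` is determined by its ends, so each entry of `U²` is zero or
a single product of entries of `U`, and comparing signs gives `(U²)⁺ = B² + 1` (`posSuppC_sq`).

Writing `z - 1 = w²`, the left-hand side is therefore `det (w - B) * det (w + B)`, as the number of
arcs is even. Each factor is computed in the manner of Ihara and Bass (`ihara_bass`): since
`J² = 1`, `(w - J) (w - B) = (w² - 1) - (w - J) S T`, and the determinant of the right-hand side is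
moved to the vertex space with `T S = M` and `T J S = κ`. Multiplying the formulas for `w` and `-w`
yields `det ((z - 2 + κ)² - (z - 1) M²)` together with powers of `w² - 1 = z - 2`, which can be
cancelled when `z ≠ 2`. Both sides being continuous in `z`, the value `z = 2` follows by density.
-/

noncomputable section

open Finset Matrix

variable {V : Type*} [Fintype V] [DecidableEq V] (G : SimpleGraph V) [DecidableRel G.Adj]

/-! ### Arc matrices -/

/-- The arc-to-origin incidence matrix: `S e v = 1` when `e` starts at `v`. -/
def arcOrigin : Matrix G.Dart V ℂ := fun e v => if e.fst = v then 1 else 0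

/-- The vertex-by-arc terminus incidence matrix: `T v e = 1` when `e` ends at `v`. -/
def arcTerminus : Matrix V G.Dart ℂ := fun v e => if e.snd = v then 1 else 0

/-- The permutation matrix of the arc reversal `e ↦ ē`. -/
def arcReversal : Matrix G.Dart G.Dart ℂ := fun e f => if f = e.symm then 1 else 0

/-- The non-backtracking matrix: the `(e, f)` entry is `1` when `f` can be followed by `e` and
`e` is not the reversal of `f`, and `0` otherwise. For `κ ≥ 3` it is
the positive support of the Grover matrix. -/
def nonBacktracking : Matrix G.Dart G.Dart ℂ := arcOrigin G * arcTerminus G - arcReversal G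

lemma nonBacktracking_apply (e f : G.Dart) :
    nonBacktracking G e f = if f.snd = e.fst ∧ f ≠ e.symm then 1 else 0 := by
  by_cases h : f = e.symm
  · simp [nonBacktracking, arcOrigin, arcTerminus, arcReversal, Matrix.mul_apply, h]
  · simp [nonBacktracking, arcOrigin, arcTerminus, arcReversal, Matrix.mul_apply, h, eq_comm]

lemma arcReversal_mul_self : arcReversal G * arcReversal G = 1 := by
  ext e f
  rw [Matrix.mul_apply, Finset.sum_eq_single e.symm]
  · simp [arcReversal, Matrix.one_apply, eq_comm]
  · intro d _ hd
    simp [arcReversal, hd]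
  · simp

lemma arcTerminus_mul_arcOrigin : arcTerminus G * arcOrigin G = G.adjMatrix ℂ := by
  ext u v
  simp only [arcTerminus, arcOrigin, Matrix.mul_apply, SimpleGraph.adjMatrix_apply]
  by_cases h : G.Adj u v
  · rw [Finset.sum_eq_single (⟨(v, u), h.symm⟩ : G.Dart)]
    · simp [h]
    · intro d _ hd
      by_cases h1 : d.snd = u
      · by_cases h2 : d.fst = v
        · exact absurd (SimpleGraph.Dart.ext _ _ (Prod.ext h2 h1)) hd
        · simp [h2]
      · simp [h1]
    · simp
  · rw [if_neg h]
    refine Finset.sum_eq_zero fun d _ => ?_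
    by_cases h1 : d.snd = u
    · by_cases h2 : d.fst = v
      · exact absurd (h1 ▸ h2 ▸ d.adj.symm) h
      · simp [h2]
    · simp [h1]

lemma arcReversal_mul_arcOrigin (e : G.Dart) (v : V) :
    (arcReversal G * arcOrigin G) e v = if e.snd = v then 1 else 0 := by
  rw [Matrix.mul_apply, Finset.sum_eq_single e.symm]
  · simp [arcReversal, arcOrigin]
  · intro d _ hd
    simp [arcReversal, hd]
  · simp

lemma arcTerminus_mul_arcReversal_mul_arcOrigin {κ : ℕ} (hreg : G.IsRegularOfDegree κ) :
    arcTerminus G * (arcReversal G * arcOrigin G) = (κ : ℂ) • (1 : Matrix V V ℂ) := by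
  ext u v
  rw [Matrix.mul_apply]
  simp only [arcReversal_mul_arcOrigin, arcTerminus, Matrix.smul_apply, Matrix.one_apply]
  by_cases h : u = v
  · subst h
    have hcard : (univ.filter fun d : G.Dart => d.snd = u).card = κ := by
      rw [← hreg u, ← G.dart_fst_fiber_card_eq_degree u]
      refine Finset.card_bij (fun d _ => d.symm) ?_ ?_ ?_
      · intro d hd
        simpa using hd
      · intro a _ b _ hab
        exact SimpleGraph.Dart.symm_involutive.injective hab
      · intro b hb
        exact ⟨b.symm, by simpa using hb, by simp⟩
    simp only [← ite_and, and_self, mul_ite, mul_one, mul_zero, Finset.sum_boole, hcard, if_true,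
      smul_eq_mul]
  · simp only [h, if_false, smul_zero]
    refine Finset.sum_eq_zero fun d _ => ?_
    by_cases h1 : d.snd = u
    · simp [h1, h]
    · simp [h1]

/-! ### The positive support of the squared Grover matrix -/

/-- In a simple graph the middle arc of a length-three arc sequence `f, g, e` is determined by `e`
and `f`, so `(U²)_{e,f}` is zero or one product of two entries of `U`. Since `2/κ - 1 < 0`, the product is
positive exactly when neither step or both steps backtrack, and in the latter case `e = f`. -/
lemma posSuppC_sq {κ : ℕ} (hκ : 3 ≤ κ) :
    posSuppC ((GroverM G κ) ^ 2) = nonBacktracking G * nonBacktracking G + 1 := by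
  have hκ' : (3 : ℝ) ≤ κ := by exact_mod_cast hκ
  have hpos : (0 : ℝ) < 2 / κ := by positivity
  have hneg : (2 : ℝ) / κ - 1 < 0 := by
    rw [sub_neg, div_lt_one (by linarith)]
    linarith
  ext e f
  rw [posSuppC, pow_two, Matrix.add_apply, Matrix.mul_apply, Matrix.mul_apply]
  by_cases h : G.Adj f.snd e.fst
  · have huniq : ∀ g : G.Dart, g ≠ ⟨(f.snd, e.fst), h⟩ → g.snd = e.fst → f.snd ≠ g.fst := by
      intro g hg h1 h2
      exact hg (SimpleGraph.Dart.ext _ _ (Prod.ext h2.symm h1))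
    rw [Finset.sum_eq_single (⟨(f.snd, e.fst), h⟩ : G.Dart),
      Finset.sum_eq_single (⟨(f.snd, e.fst), h⟩ : G.Dart)]
    · simp only [nonBacktracking_apply, GroverM, Matrix.one_apply, true_and, if_true]
      generalize hg0 : (⟨(f.snd, e.fst), h⟩ : G.Dart) = g
      have hg1 : g.fst = f.snd := by rw [← hg0]
      have hg2 : g.snd = e.fst := by rw [← hg0]
      by_cases ha : g = e.symm <;> by_cases hb : f = g.symm
      · have hef : e = f := by rw [hb, ha]; simp
        have := mul_pos_of_neg_of_neg hneg hneg
        rw [if_pos ha, if_pos hb, if_pos this, if_pos hef,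
          if_neg (not_not.2 ha)]
        simp
      · have hef : e ≠ f := by
          rintro rfl
          exact hb (by rw [ha]; simp)
        have := mul_neg_of_neg_of_pos hneg hpos
        rw [if_pos ha, if_neg hb, sub_zero, if_neg this.not_gt,
          if_neg hef, if_neg (not_not.2 ha)]
        simp
      · have hef : e ≠ f := by
          rintro rfl
          exact ha (by rw [hb]; simp)
        have := mul_neg_of_pos_of_neg hpos hneg
        rw [if_neg ha, if_pos hb, sub_zero, if_neg this.not_gt,
          if_neg hef, if_pos ha, if_neg (not_not.2 hb)]
        simp
      · have hef : e ≠ f := by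
          rintro rfl
          exact ha (SimpleGraph.Dart.ext _ _ (Prod.ext hg1 hg2))
        have := mul_pos hpos hpos
        rw [if_neg ha, if_neg hb, sub_zero, if_pos this,
          if_neg hef, if_pos ha, if_pos hb]
        simp
    · intro g _ hg
      rw [nonBacktracking_apply, nonBacktracking_apply]
      by_cases h1 : g.snd = e.fst
      · simp [huniq g hg h1]
      · simp [h1]
    · simp
    · intro g _ hg
      simp only [GroverM]
      by_cases h1 : g.snd = e.fst
      · simp [huniq g hg h1]
      · simp [h1]
    · simp
  · have hstep : ∀ g : G.Dart, g.snd = e.fst → f.snd ≠ g.fst := by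
      intro g h1 h2
      exact h (h1 ▸ h2 ▸ g.adj)
    have hef : e ≠ f := by
      rintro rfl
      exact h e.adj.symm
    rw [Finset.sum_eq_zero, Finset.sum_eq_zero]
    · simp [hef]
    · intro g _
      rw [nonBacktracking_apply, nonBacktracking_apply]
      by_cases h1 : g.snd = e.fst
      · simp [hstep g h1]
      · simp [h1]
    · intro g _
      simp only [GroverM]
      by_cases h1 : g.snd = e.fst
      · simp [hstep g h1]
      · simp [h1]

/-! ### Ihara–Bass determinant formulas -/

/-- Weinstein–Aronszajn identity for rectangular factors, in homogeneous form. -/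
lemma det_smul_sub_mul_comm {m n : Type*} [Fintype m] [DecidableEq m] [Fintype n] [DecidableEq n]
    (P : Matrix m n ℂ) (Q : Matrix n m ℂ) (c : ℂ) :
    c ^ Fintype.card n * (c • (1 : Matrix m m ℂ) - P * Q).det
      = c ^ Fintype.card m * (c • (1 : Matrix n n ℂ) - Q * P).det := by
  have h := congrArg (Polynomial.eval c) (Matrix.charpoly_mul_comm' P Q)
  simpa [Matrix.eval_charpoly, Matrix.smul_one_eq_diagonal] using h

/-- The Ihara–Bass computation: multiplying `w - B` by `w - J` turns it into
`w² - 1 - (w - J) S T`, whose determinant is transferred to the vertex space. -/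
lemma ihara_bass {κ : ℕ} (hreg : G.IsRegularOfDegree κ) (w : ℂ) :
    (w ^ 2 - 1) ^ Fintype.card V *
        ((w • 1 - arcReversal G).det * (w • 1 - nonBacktracking G).det)
      = (w ^ 2 - 1) ^ Fintype.card G.Dart *
        ((w ^ 2 - 1 + κ) • (1 : Matrix V V ℂ) - w • G.adjMatrix ℂ).det := by
  have hJ := arcReversal_mul_self G
  have h1 : (w • 1 - arcReversal G) * (w • 1 - nonBacktracking G)
      = (w ^ 2 - 1) • 1 - ((w • 1 - arcReversal G) * arcOrigin G) * arcTerminus G := by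
    have : w • 1 - nonBacktracking G
        = (w • 1 + arcReversal G) - arcOrigin G * arcTerminus G := by
      rw [nonBacktracking]; abel
    rw [this, mul_sub, Matrix.mul_assoc]
    congr 1
    simp only [sub_mul, mul_add, hJ, smul_mul_assoc, one_mul, mul_smul_comm, mul_one, pow_two]
    module
  have h2 : (w ^ 2 - 1) • (1 : Matrix V V ℂ)
        - arcTerminus G * ((w • 1 - arcReversal G) * arcOrigin G)
      = (w ^ 2 - 1 + κ) • (1 : Matrix V V ℂ) - w • G.adjMatrix ℂ := by
    rw [Matrix.sub_mul, Matrix.mul_sub, arcTerminus_mul_arcReversal_mul_arcOrigin G hreg,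
      Matrix.smul_mul, Matrix.one_mul, Matrix.mul_smul, arcTerminus_mul_arcOrigin, add_smul]
    abel
  rw [← Matrix.det_mul, h1, det_smul_sub_mul_comm, h2]

lemma card_le_card_edges {κ : ℕ} (hκ : 3 ≤ κ) (hreg : G.IsRegularOfDegree κ) :
    Fintype.card V ≤ G.edgeFinset.card := by
  have h := G.sum_degrees_eq_twice_card_edges
  simp only [hreg.degree_eq, Finset.sum_const, Finset.card_univ, smul_eq_mul] at h
  nlinarith

/-- The factorization away from `z = 2`, where the powers of `w² - 1 = z - 2` can be cancelled. -/
lemma det_factor_of_ne {κ : ℕ} (hκ : 3 ≤ κ) (hreg : G.IsRegularOfDegree κ) (z : ℂ) (hz : z ≠ 2) :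
    (z • (1 : Matrix G.Dart G.Dart ℂ) - posSuppC ((GroverM G κ) ^ 2)).det
        = (z - 2) ^ (2 * (G.edgeFinset.card - Fintype.card V)) *
          (z ^ 2 • (1 : Matrix V V ℂ)
            - z • ((G.adjMatrix ℂ) ^ 2 - (2 * ((κ : ℂ) - 2)) • 1)
            + ((G.adjMatrix ℂ) ^ 2 + ((κ : ℂ) - 2) ^ 2 • 1)).det := by
  obtain ⟨w, hw⟩ := IsAlgClosed.exists_pow_nat_eq (z - 1) (n := 2) (by norm_num)
  obtain rfl : z = w ^ 2 + 1 := by rw [hw]; ring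
  have hc : w ^ 2 - 1 ≠ 0 := fun h => hz (by linear_combination h)
  have hc2 : w ^ 2 + 1 - 2 = w ^ 2 - 1 := by ring
  set B := nonBacktracking G with hB
  set J := arcReversal G with hJ
  set M := G.adjMatrix ℂ with hM
  have key1 := ihara_bass G hreg w
  have key2 := ihara_bass G hreg (-w)
  rw [← hB, ← hJ, ← hM] at key1 key2
  rw [neg_sq] at key2
  -- `(w - B) (-w - B) = -(w² - B²)`; the sign drops out because the number of arcs is even
  have hBB : (w • 1 - B).det * (-w • 1 - B).det
      = ((w ^ 2 + 1) • (1 : Matrix G.Dart G.Dart ℂ) - posSuppC ((GroverM G κ) ^ 2)).det := by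
    have heven : Even (Fintype.card G.Dart) := by
      rw [G.dart_card_eq_twice_card_edges]; exact even_two_mul _
    have hneg : ∀ X : Matrix G.Dart G.Dart ℂ, X.det = (-X).det := fun X => by
      rw [Matrix.det_neg, heven.neg_one_pow, one_mul]
    rw [posSuppC_sq G hκ, ← Matrix.det_mul, hneg (_ - (_ + _))]
    congr 1
    simp only [sub_mul, mul_sub, smul_mul_assoc, one_mul, mul_smul_comm, mul_one, pow_two]
    module
  have hJJ : (w • 1 - J).det * (-w • 1 - J).det = (w ^ 2 - 1) ^ Fintype.card G.Dart := by
    have heven : Even (Fintype.card G.Dart) := by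
      rw [G.dart_card_eq_twice_card_edges]; exact even_two_mul _
    have : (w • 1 - J) * (-w • 1 - J) = -((w ^ 2 - 1) • 1) := by
      simp only [sub_mul, mul_sub, smul_mul_assoc, one_mul, mul_smul_comm, mul_one, pow_two,
        hJ, arcReversal_mul_self]
      module
    rw [← Matrix.det_mul, this, Matrix.det_neg, heven.neg_one_pow, one_mul, Matrix.det_smul,
      Matrix.det_one, mul_one]
  have hMM : ((w ^ 2 - 1 + κ) • (1 : Matrix V V ℂ) - w • M).det *
      ((w ^ 2 - 1 + κ) • (1 : Matrix V V ℂ) - -w • M).det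
      = ((w ^ 2 + 1) ^ 2 • (1 : Matrix V V ℂ)
            - (w ^ 2 + 1) • (M ^ 2 - (2 * ((κ : ℂ) - 2)) • 1)
            + (M ^ 2 + ((κ : ℂ) - 2) ^ 2 • 1)).det := by
    rw [← Matrix.det_mul]
    congr 1
    simp only [sub_mul, mul_sub, smul_mul_assoc, one_mul, mul_smul_comm, mul_one, pow_two]
    module
  rw [hc2, ← hBB, ← hMM]
  have hcard := card_le_card_edges G hκ hreg
  have hpow : (w ^ 2 - 1) ^ Fintype.card G.Dart
      = (w ^ 2 - 1) ^ (2 * (G.edgeFinset.card - Fintype.card V)) *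
        ((w ^ 2 - 1) ^ Fintype.card V) ^ 2 := by
    rw [← pow_mul, ← pow_add, G.dart_card_eq_twice_card_edges]
    congr 1
    omega
  have hV : (w ^ 2 - 1) ^ Fintype.card V ≠ 0 := pow_ne_zero _ hc
  have hA : (w ^ 2 - 1) ^ Fintype.card G.Dart ≠ 0 := pow_ne_zero _ hc
  have hprod := congrArg₂ (· * ·) key1 key2
  beta_reduce at hprod
  apply mul_left_cancel₀ (mul_ne_zero hA (pow_ne_zero 2 hV))
  generalize (w ^ 2 - 1) ^ Fintype.card G.Dart = a at *
  generalize (w ^ 2 - 1) ^ Fintype.card V = b at *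
  generalize (w ^ 2 - 1) ^ (2 * (G.edgeFinset.card - Fintype.card V)) = q at *
  linear_combination hprod - b ^ 2 * (w • 1 - B).det * (-w • 1 - B).det * hJJ
    + a * ((w ^ 2 - 1 + κ) • (1 : Matrix V V ℂ) - w • M).det *
      ((w ^ 2 - 1 + κ) • (1 : Matrix V V ℂ) - -w • M).det * hpow

/-- For a finite connected `κ`-regular graph with `κ ≥ 3` and girth
at least `5`,
`det(z·1_A − (U²)⁺) = (z − 2)^{2(|E|−|V|)} · det(z²·1_V − z·(M² − 2(κ−2)·1_V) + (M² + (κ−2)²·1_V))`. -/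
theorem statement18 (hG : G.Connected) (κ : ℕ) (hκ : 3 ≤ κ)
    (hreg : G.IsRegularOfDegree κ) (hgirth : 5 ≤ G.girth) :
    ∀ z : ℂ,
      (z • (1 : Matrix G.Dart G.Dart ℂ) - posSuppC ((GroverM G κ) ^ 2)).det
        = (z - 2) ^ (2 * (G.edgeFinset.card - Fintype.card V)) *
          (z ^ 2 • (1 : Matrix V V ℂ)
            - z • ((G.adjMatrix ℂ) ^ 2 - (2 * ((κ : ℂ) - 2)) • 1)
            + ((G.adjMatrix ℂ) ^ 2 + ((κ : ℂ) - 2) ^ 2 • 1)).det := by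
  intro z
  refine congrFun (Continuous.ext_on (dense_compl_singleton (2 : ℂ)) ?_ ?_
    (fun z hz => det_factor_of_ne G hκ hreg z hz)) z
  · exact Continuous.matrix_det (by fun_prop)
  · exact Continuous.mul (by fun_prop) (Continuous.matrix_det (by fun_prop))

end
end
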